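/- arXiv:2110.15550 — 12 statements merged into one kernel-verified Lean document; each statement's English description precedes it below -/
import Mathlib

section
/- Suppose h > 0, x_k, x_{k+1}, x^* ∈ ℝⁿ and η_k ∈ ℝ satisfy the Lagrange multiplier scheme (x_{k+1} − x_k)/h = −D(Q(x_{k+1} + x_k)/2 + η_k ∇E(x^*)) and E(x_{k+1}) − E(x_k) = η_k ⟨∇E(x^*), x_{k+1} − x_k⟩. Then the discrete dissipation law V(x_{k+1}) ≤ V(x_k) holds. -/
open RealInnerProductSpace

/-!
The force `w = Q ((xk1 + xk) / 2) + η ∇E(xs)` is a discrete gradient of `V`: symmetry of `Q` handles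
the quadratic part and the multiplier equation the rest, so `V xk1 - V xk = ⟪w, xk1 - xk⟫`. The
scheme makes the step `xk1 - xk = -h D w`, hence this difference is `-h ⟪w, D w⟫ ≤ 0`.
-/

section Energy

variable {F : Type*} [SeminormedAddCommGroup F] [InnerProductSpace ℝ F]

/-- The free energy `V` of a gradient system, split into the quadratic form of `Q`, which the scheme
discretizes by the midpoint rule, and a remainder `E`, which it treats by a Lagrange multiplier. -/
noncomputable def energy (Q : F →ₗ[ℝ] F) (E : F → ℝ) (x : F) : ℝ :=
  (1 / 2) * ⟪x, Q x⟫ + E x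

lemma inner_map_self_nonneg_of_pos {D : F → F} (hD : ∀ v, v ≠ 0 → 0 < ⟪v, D v⟫) (v : F) :
    0 ≤ ⟪v, D v⟫ := by
  rcases eq_or_ne v 0 with rfl | hv
  · rw [inner_zero_left]
  · exact (hD v hv).le

lemma inner_map_add_sub_of_isSymmetric {Q : F →ₗ[ℝ] F} (hQ : Q.IsSymmetric) (x y : F) :
    ⟪Q (y + x), y - x⟫ = ⟪y, Q y⟫ - ⟪x, Q x⟫ := by
  have cross_terms : ⟪Q y, x⟫ = ⟪Q x, y⟫ := (hQ y x).trans (real_inner_comm _ _)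
  rw [map_add, inner_add_left, inner_sub_right, inner_sub_right, cross_terms, hQ y y, hQ x x]
  ring

lemma energy_sub_energy {Q : F →ₗ[ℝ] F} (hQ : Q.IsSymmetric) {E : F → ℝ} {x y g : F} {η : ℝ}
    (hE : E y - E x = η * ⟪g, y - x⟫) :
    energy Q E y - energy Q E x = ⟪Q ((1 / 2 : ℝ) • (y + x)) + η • g, y - x⟫ := by
  calc energy Q E y - energy Q E x
      = (1 / 2) * (⟪y, Q y⟫ - ⟪x, Q x⟫) + (E y - E x) := by
        unfold energy
        ring
    _ = (1 / 2) * ⟪Q (y + x), y - x⟫ + η * ⟪g, y - x⟫ := by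
        rw [inner_map_add_sub_of_isSymmetric hQ, hE]
    _ = ⟪Q ((1 / 2 : ℝ) • (y + x)) + η • g, y - x⟫ := by
        rw [map_smul, inner_add_left, real_inner_smul_left, real_inner_smul_left]

lemma inner_nonpos_of_inv_smul_eq_neg {h : ℝ} (hh : 0 < h) {u v w : F} (huv : h⁻¹ • u = -v)
    (hwv : 0 ≤ ⟪w, v⟫) : ⟪w, u⟫ ≤ 0 := by
  have hu : u = -(h • v) := by rw [← smul_neg, ← huv, smul_inv_smul₀ hh.ne']
  rw [hu, inner_neg_right, real_inner_smul_right, neg_nonpos]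
  exact mul_nonneg hh.le hwv

theorem stmt_0_general {D : F → F} (hD : ∀ v, 0 ≤ ⟪v, D v⟫) {Q : F →ₗ[ℝ] F} (hQ : Q.IsSymmetric)
    (E : F → ℝ) {h : ℝ} (hh : 0 < h) {x y g : F} {η : ℝ}
    (hstep : h⁻¹ • (y - x) = -D (Q ((1 / 2 : ℝ) • (y + x)) + η • g))
    (hmult : E y - E x = η * ⟪g, y - x⟫) :
    energy Q E y ≤ energy Q E x := by
  rw [← sub_nonpos, energy_sub_energy hQ hmult]
  exact inner_nonpos_of_inv_smul_eq_neg hh hstep (hD _)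

end Energy

/-- Discrete dissipation law for the Lagrange multiplier scheme (Theorem `thm:LMdisp`). -/
theorem stmt_0 (n : ℕ) (hn : 1 ≤ n)
    (D Q : Matrix (Fin n) (Fin n) ℝ)
    (hD : ∀ v : EuclideanSpace ℝ (Fin n), v ≠ 0 → 0 < ⟪v, Matrix.toEuclideanLin D v⟫)
    (hQ : Q.IsSymm)
    (E : EuclideanSpace ℝ (Fin n) → ℝ)
    (gE : EuclideanSpace ℝ (Fin n) → EuclideanSpace ℝ (Fin n))
    (hE : ∀ x, HasGradientAt E (gE x) x)
    (V : EuclideanSpace ℝ (Fin n) → ℝ)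
    (hV : ∀ x, V x = (1/2) * ⟪x, Matrix.toEuclideanLin Q x⟫ + E x)
    (h : ℝ) (hh : 0 < h)
    (xk xk1 xs : EuclideanSpace ℝ (Fin n)) (η : ℝ)
    (hscheme1 : h⁻¹ • (xk1 - xk) =
      -(Matrix.toEuclideanLin D
        (Matrix.toEuclideanLin Q ((1/2 : ℝ) • (xk1 + xk)) + η • gE xs)))
    (hscheme2 : E xk1 - E xk = η * ⟪gE xs, xk1 - xk⟫) :
    V xk1 ≤ V xk := by
  have hQ_symm : (Matrix.toEuclideanLin Q).IsSymmetric :=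
    Matrix.isSymmetric_toEuclideanLin_iff.2
      ((Matrix.conjTranspose_eq_transpose_of_trivial Q).trans hQ)
  simpa only [energy, hV] using
    stmt_0_general (inner_map_self_nonneg_of_pos hD) hQ_symm E hh hscheme1 hscheme2
end

section
/- If f is convex, then for every t > 0 the solution of the gradient flow satisfies f(x(t)) − f⋆ ≤ ‖x₀ − x⋆‖²/(2t). -/
open RealInnerProductSpace

/-!
Along the flow, `V(t) = t (f(x(t)) - f(z)) + ‖x(t) - z‖² / 2` has derivative
`(f(x) - f(z) - ⟪∇f(x), x - z⟫) - t ‖∇f(x)‖²`. Convexity makes the bracket nonpositive, so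
`t (f(x(t)) - f(z)) ≤ V(t) ≤ V(0) = ‖x(0) - z‖² / 2`.
-/

section FirstOrderCondition

variable {E : Type*} [NormedAddCommGroup E] [NormedSpace ℝ E]

theorem convexOn_apply_sub_le_of_hasFDerivWithinAt {C : Set E} {f : E → ℝ} {L : E →L[ℝ] ℝ}
    {y z : E} (hconv : ConvexOn ℝ C f) (hy : y ∈ C) (hz : z ∈ C)
    (hf : HasFDerivWithinAt f L C y) : L (z - y) ≤ f z - f y := by
  let line : ℝ →ᵃ[ℝ] E := AffineMap.lineMap y z
  have hline : HasDerivWithinAt (f ∘ line) (L (z - y)) (line ⁻¹' C) 0 :=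
    hf.comp_hasDerivWithinAt_of_eq 0 AffineMap.hasDerivWithinAt_lineMap
      (Set.mapsTo_preimage line C) (AffineMap.lineMap_apply_zero y z).symm
  have hslope : L (z - y) ≤ slope (f ∘ line) 0 1 :=
    (hconv.comp_affineMap line).le_slope_of_hasDerivWithinAt (by simpa [line] using hy)
      (by simpa [line] using hz) one_pos hline
  simpa [line, slope_def_field] using hslope

end FirstOrderCondition

section GradientFlow

variable {E : Type*} [NormedAddCommGroup E] [InnerProductSpace ℝ E] [CompleteSpace E]
  {C : Set E} {I : Set ℝ} {f : E → ℝ} {f' : E → E} {x : ℝ → E} {z : E}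

theorem convexOn_sub_le_inner_of_hasGradientWithinAt {g y : E} (hconv : ConvexOn ℝ C f)
    (hy : y ∈ C) (hz : z ∈ C) (hf : HasGradientWithinAt f g C y) :
    f y - f z ≤ ⟪g, y - z⟫ := by
  have h : ⟪g, z - y⟫ ≤ f z - f y := by
    simpa using convexOn_apply_sub_le_of_hasFDerivWithinAt hconv hy hz hf.hasFDerivWithinAt
  rw [← neg_sub y z, inner_neg_right] at h
  linarith

theorem hasDerivWithinAt_comp_of_hasGradientWithinAt {g v : E} {s : ℝ}
    (hf : HasGradientWithinAt f g C (x s)) (hx : HasDerivWithinAt x v I s)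
    (hxC : Set.MapsTo x I C) : HasDerivWithinAt (f ∘ x) ⟪g, v⟫ I s := by
  simpa using hf.hasFDerivWithinAt.comp_hasDerivWithinAt s hx hxC

/-- The Lyapunov function of the gradient flow of a convex function `f` along a curve `x`, relative
to an arbitrary comparison point `z`. -/
noncomputable def gradientFlowLyapunov (f : E → ℝ) (x : ℝ → E) (z : E) (s : ℝ) : ℝ :=
  s * (f (x s) - f z) + ‖x s - z‖ ^ 2 / 2

theorem hasDerivWithinAt_gradientFlowLyapunov {g : E} {s : ℝ}
    (hf : HasGradientWithinAt f g C (x s)) (hx : HasDerivWithinAt x (-g) I s)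
    (hxC : Set.MapsTo x I C) :
    HasDerivWithinAt (gradientFlowLyapunov f x z)
      (f (x s) - f z - ⟪g, x s - z⟫ - s * ‖g‖ ^ 2) I s := by
  have hvalue : HasDerivWithinAt (fun r ↦ f (x r) - f z) ⟪g, -g⟫ I s :=
    (hasDerivWithinAt_comp_of_hasGradientWithinAt hf hx hxC).sub_const (f z)
  have hdist : HasDerivWithinAt (fun r ↦ ‖x r - z‖ ^ 2) (2 * ⟪x s - z, -g⟫) I s :=
    (hx.sub_const z).norm_sq
  refine (((hasDerivWithinAt_id s I).mul hvalue).add (hdist.div_const 2)).congr_deriv ?_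
  simp only [id, inner_neg_right, real_inner_self_eq_norm_sq, real_inner_comm g]
  ring

theorem antitoneOn_gradientFlowLyapunov (hconv : ConvexOn ℝ C f)
    (hf : ∀ y ∈ C, HasGradientWithinAt f (f' y) C y) (hI : Convex ℝ I) (hI₀ : I ⊆ Set.Ici 0)
    (hxC : Set.MapsTo x I C) (hflow : IsIntegralCurveOn x (fun _ y ↦ -f' y) I) (hz : z ∈ C) :
    AntitoneOn (gradientFlowLyapunov f x z) I := by
  have hderiv (s : ℝ) (hs : s ∈ I) :=
    hasDerivWithinAt_gradientFlowLyapunov (z := z) (hf (x s) (hxC hs)) (hflow s hs) hxC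
  refine antitoneOn_of_hasDerivWithinAt_nonpos hI (fun s hs ↦ (hderiv s hs).continuousWithinAt)
    (fun s hs ↦ (hderiv s (interior_subset hs)).mono interior_subset) fun s hs ↦ ?_
  have hsI : s ∈ I := interior_subset hs
  have hgap : f (x s) - f z ≤ ⟪f' (x s), x s - z⟫ :=
    convexOn_sub_le_inner_of_hasGradientWithinAt hconv (hxC hsI) hz (hf (x s) (hxC hsI))
  have hdecay : 0 ≤ s * ‖f' (x s)‖ ^ 2 := mul_nonneg (hI₀ hsI) (sq_nonneg _)
  linarith

theorem stmt_2_general (hconv : ConvexOn ℝ C f)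
    (hf : ∀ y ∈ C, HasGradientWithinAt f (f' y) C y) {t : ℝ} (ht : 0 < t)
    (hxC : Set.MapsTo x (Set.Icc 0 t) C)
    (hflow : IsIntegralCurveOn x (fun _ y ↦ -f' y) (Set.Icc 0 t)) (hz : z ∈ C) :
    f (x t) - f z ≤ ‖x 0 - z‖ ^ 2 / (2 * t) := by
  have hV : gradientFlowLyapunov f x z t ≤ gradientFlowLyapunov f x z 0 :=
    antitoneOn_gradientFlowLyapunov hconv hf (convex_Icc 0 t) Set.Icc_subset_Ici_self hxC hflow hz
      (Set.left_mem_Icc.2 ht.le) (Set.right_mem_Icc.2 ht.le) ht.le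
  have hbound : t * (f (x t) - f z) ≤ ‖x 0 - z‖ ^ 2 / 2 :=
    calc t * (f (x t) - f z) ≤ gradientFlowLyapunov f x z t :=
          le_add_of_nonneg_right (by positivity)
      _ ≤ gradientFlowLyapunov f x z 0 := hV
      _ = ‖x 0 - z‖ ^ 2 / 2 := by simp [gradientFlowLyapunov]
  rw [le_div_iff₀ (by positivity)]
  linarith

end GradientFlow

/-- Gradient-flow rate for convex functions (Theorem `thm:convrate`). -/
theorem stmt_2 (n : ℕ) (hn : 1 ≤ n)
    (f : EuclideanSpace ℝ (Fin n) → ℝ)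
    (f' : EuclideanSpace ℝ (Fin n) → EuclideanSpace ℝ (Fin n))
    (hf : ∀ x, HasGradientAt f (f' x) x)
    (hf'cont : Continuous f')
    (hconv : ConvexOn ℝ Set.univ f)
    (xstar : EuclideanSpace ℝ (Fin n)) (hstar : ∀ y, f xstar ≤ f y)
    (x : ℝ → EuclideanSpace ℝ (Fin n)) (x0 : EuclideanSpace ℝ (Fin n))
    (hx0 : x 0 = x0)
    (hflow : ∀ t : ℝ, 0 ≤ t → HasDerivAt x (-(f' (x t))) t)
    (t : ℝ) (ht : 0 < t) :
    f (x t) - f xstar ≤ ‖x0 - xstar‖ ^ 2 / (2 * t) :=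
  hx0 ▸ stmt_2_general hconv (fun y _ ↦ hasGradientWithinAt_univ.2 (hf y)) ht
    (Set.mapsTo_univ x _) (fun s hs ↦ (hflow s hs.1).hasDerivWithinAt) (Set.mem_univ xstar)
end

section
/- Suppose E is L_E-smooth (∇E is L_E-Lipschitz), ∇E(x_k) ≠ 0, the matrix I + (h/2)DQ is invertible, and there exist real numbers q_min and d_min with ⟨v, Qv⟩ ≥ q_min‖v‖² and ⟨v, D⁻¹v⟩ ≥ d_min‖v‖² for all v ∈ ℝⁿ, such that h(q_min − L_E) > −2 d_min. Then there exists η̄ ∈ ℝ such that F_h(η̄; x_k) > 0. -/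
open RealInnerProductSpace

/-!
Write `y = p - (h * η) • q`. The descent inequality at `x` bounds `F_h(η)` from below by
`(1 - η) * ⟪g, y - x⟫ - L / 2 * ‖y - x‖ ^ 2`, a quadratic polynomial in `η` with leading
coefficient `h * (⟪g, q⟫ - h / 2 * L * ‖q‖ ^ 2)`. The equation defining `q` reads `q = D w` with
`w = g - (h / 2) • Q q`, so the lower bounds on `D⁻¹` and `Q` yield
`⟪g, q⟫ ≥ (d_min + h / 2 * q_min) * ‖q‖ ^ 2`. By the step-size condition the leading coefficient is
positive, hence `F_h(η) → ∞` as `η → ∞`.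
-/

open Filter Matrix

section Descent

variable {V : Type*} [NormedAddCommGroup V] [InnerProductSpace ℝ V]

/-- `g` is a global proximal subgradient of `E` at `x`: `E` lies above the concave paraboloid of
curvature `L` with slope `g` that touches it at `x`. -/
def IsProximalSubgradient (E : V → ℝ) (L : ℝ) (x g : V) : Prop :=
  ∀ y, E x + ⟪g, y - x⟫ - L / 2 * ‖y - x‖ ^ 2 ≤ E y

theorem hasDerivAt_line_of_hasGradientAt [CompleteSpace V] {E : V → ℝ} {g x d : V} {t : ℝ}
    (hE : HasGradientAt E g (x + t • d)) :
    HasDerivAt (fun s : ℝ => E (x + s • d)) ⟪g, d⟫ t := by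
  have hline : HasDerivAt (fun s : ℝ => x + s • d) d t := by
    simpa using ((hasDerivAt_id t).smul_const d).const_add x
  exact hE.hasFDerivAt.comp_hasDerivAt t hline

theorem isProximalSubgradient_of_neg_mul_le_inner [CompleteSpace V] {E : V → ℝ} {gE : V → V}
    (hE : ∀ y, HasGradientAt E (gE y) y) {L : ℝ} {x : V}
    (hmono : ∀ y, -(L * ‖y - x‖ ^ 2) ≤ ⟪gE y - gE x, y - x⟫) :
    IsProximalSubgradient E L x (gE x) := by
  intro y
  set d := y - x with hd
  let φ : ℝ → ℝ := fun t => E (x + t • d) - t * ⟪gE x, d⟫ + L / 2 * ‖d‖ ^ 2 * t ^ 2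
  have hφ (t : ℝ) : HasDerivAt φ (⟪gE (x + t • d) - gE x, d⟫ + L * ‖d‖ ^ 2 * t) t := by
    refine (((hasDerivAt_line_of_hasGradientAt (hE (x + t • d))).sub
      ((hasDerivAt_id t).mul_const ⟪gE x, d⟫)).add
      ((hasDerivAt_pow 2 t).const_mul (L / 2 * ‖d‖ ^ 2))).congr_deriv ?_
    rw [inner_sub_left]
    ring
  have hφ_nonneg {t : ℝ} (ht : 0 < t) :
      0 ≤ ⟪gE (x + t • d) - gE x, d⟫ + L * ‖d‖ ^ 2 * t := by
    have hline := hmono (x + t • d)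
    rw [add_sub_cancel_left, inner_smul_right, norm_smul, mul_pow, Real.norm_of_nonneg ht.le]
      at hline
    exact nonneg_of_mul_nonneg_right (by linarith) ht
  have hφ_mono : MonotoneOn φ (Set.Ici 0) := by
    refine monotoneOn_of_deriv_nonneg (convex_Ici 0)
      (fun t _ => (hφ t).continuousAt.continuousWithinAt)
      (fun t _ => (hφ t).differentiableAt.differentiableWithinAt) fun t ht => ?_
    rw [(hφ t).deriv]
    exact hφ_nonneg (by simpa using ht)
  have h01 : φ 0 ≤ φ 1 := hφ_mono Set.self_mem_Ici (Set.mem_Ici.2 zero_le_one) zero_le_one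
  simp only [φ, hd, zero_smul, add_zero, zero_mul, one_smul, add_sub_cancel, one_mul] at h01
  linarith

theorem isProximalSubgradient_of_norm_sub_le [CompleteSpace V] {E : V → ℝ} {gE : V → V}
    (hE : ∀ y, HasGradientAt E (gE y) y) {L : ℝ} {x : V}
    (hL : ∀ y, ‖gE y - gE x‖ ≤ L * ‖y - x‖) :
    IsProximalSubgradient E L x (gE x) := by
  refine isProximalSubgradient_of_neg_mul_le_inner hE fun y => neg_le_of_abs_le ?_
  calc |⟪gE y - gE x, y - x⟫| ≤ ‖gE y - gE x‖ * ‖y - x‖ := abs_real_inner_le_norm _ _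
    _ ≤ L * ‖y - x‖ * ‖y - x‖ := by gcongr; exact hL y
    _ = L * ‖y - x‖ ^ 2 := by ring

end Descent

section EuclideanLin

variable {𝕜 ι : Type*} [RCLike 𝕜] [Fintype ι] [DecidableEq ι]

theorem isUnit_of_inner_toEuclideanLin_ne_zero {D : Matrix ι ι 𝕜}
    (hD : ∀ v : EuclideanSpace 𝕜 ι, v ≠ 0 → inner 𝕜 v (toEuclideanLin D v) ≠ 0) : IsUnit D := by
  rw [← isUnit_map_iff (toLpLinAlgEquiv 2), LinearMap.isUnit_iff_ker_eq_bot,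
    LinearMap.ker_eq_bot']
  intro v hv
  by_contra hv_ne
  exact hD v hv_ne (by rw [show toEuclideanLin D v = 0 from hv, inner_zero_right])

theorem toEuclideanLin_nonsing_inv_apply_self {D : Matrix ι ι 𝕜} (hD : IsUnit D)
    (v : EuclideanSpace 𝕜 ι) : toEuclideanLin D⁻¹ (toEuclideanLin D v) = v := by
  rw [← LinearMap.comp_apply, ← toLpLin_mul_same,
    nonsing_inv_mul _ ((isUnit_iff_isUnit_det D).1 hD), toLpLin_one, LinearMap.id_apply]

theorem mul_norm_sq_le_inner_of_nonsing_inv {D : Matrix ι ι ℝ} (hD : IsUnit D) {d : ℝ}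
    (hd : ∀ v : EuclideanSpace ℝ ι, d * ‖v‖ ^ 2 ≤ ⟪v, toEuclideanLin D⁻¹ v⟫)
    (v : EuclideanSpace ℝ ι) :
    d * ‖toEuclideanLin D v‖ ^ 2 ≤ ⟪v, toEuclideanLin D v⟫ := by
  simpa only [toEuclideanLin_nonsing_inv_apply_self hD, real_inner_comm]
    using hd (toEuclideanLin D v)

theorem add_smul_toEuclideanLin_nonsing_inv_mul {D Q : Matrix ι ι 𝕜} {s : 𝕜}
    (hM : IsUnit (1 + s • (D * Q))) (g : EuclideanSpace 𝕜 ι) :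
    toEuclideanLin ((1 + s • (D * Q))⁻¹ * D) g +
        s • toEuclideanLin D (toEuclideanLin Q (toEuclideanLin ((1 + s • (D * Q))⁻¹ * D) g)) =
      toEuclideanLin D g := by
  set M := 1 + s • (D * Q) with hM_def
  set q := toEuclideanLin (M⁻¹ * D) g with hq
  calc q + s • toEuclideanLin D (toEuclideanLin Q q) = toEuclideanLin M q := by
        simp [hM_def, toLpLin_mul_same]
    _ = toEuclideanLin D g := by
        rw [hq, ← LinearMap.comp_apply, ← toLpLin_mul_same,
          mul_nonsing_inv_cancel_left _ _ ((isUnit_iff_isUnit_det M).1 hM)]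

end EuclideanLin

section EnergyDefect

variable {V : Type*} [NormedAddCommGroup V] [InnerProductSpace ℝ V]

/-- The function `F_h(η)` along the line `η ↦ p - (h * η) • q`: the increment of `E` from `x`,
minus `η` times its linearization with slope `g`. -/
def energyDefect (E : V → ℝ) (x g p q : V) (h η : ℝ) : ℝ :=
  E (p - (h * η) • q) - E x - η * ⟪g, p - (h * η) • q - x⟫

theorem tendsto_quadratic_atTop {𝕜 : Type*} [Field 𝕜] [LinearOrder 𝕜] [IsStrictOrderedRing 𝕜]
    {a : 𝕜} (ha : 0 < a) (b c : 𝕜) :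
    Tendsto (fun t => a * t ^ 2 + b * t + c) atTop atTop := by
  have hlin : Tendsto (fun t => a * t + b) atTop atTop :=
    tendsto_atTop_add_const_right _ b (tendsto_id.const_mul_atTop ha)
  refine (tendsto_atTop_add_const_right _ c (hlin.atTop_mul_atTop₀ tendsto_id)).congr fun t => ?_
  simp only [id_eq]
  ring

variable {E : V → ℝ} {L : ℝ} {x g : V}

theorem quadratic_le_energyDefect (hE : IsProximalSubgradient E L x g) (p q : V) (h η : ℝ) :
    h * (⟪g, q⟫ - h / 2 * L * ‖q‖ ^ 2) * η ^ 2 +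
        (h * L * ⟪p - x, q⟫ - ⟪g, p - x⟫ - h * ⟪g, q⟫) * η +
        (⟪g, p - x⟫ - L / 2 * ‖p - x‖ ^ 2) ≤
      energyDefect E x g p q h η := by
  have hdescent := hE (p - (h * η) • q)
  have hinner : ⟪g, p - (h * η) • q - x⟫ = ⟪g, p - x⟫ - h * η * ⟪g, q⟫ := by
    rw [sub_right_comm, inner_sub_right, real_inner_smul_right]
  have hnorm : ‖p - (h * η) • q - x‖ ^ 2 =
      ‖p - x‖ ^ 2 - 2 * (h * η * ⟪p - x, q⟫) + (h * η) ^ 2 * ‖q‖ ^ 2 := by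
    rw [sub_right_comm, norm_sub_sq_real, real_inner_smul_right, norm_smul, mul_pow,
      Real.norm_eq_abs, sq_abs]
  rw [hinner, hnorm] at hdescent
  rw [energyDefect, hinner]
  linarith

theorem tendsto_energyDefect_atTop (hE : IsProximalSubgradient E L x g) {h : ℝ} (hh : 0 < h)
    (p : V) {q : V} (hq : h / 2 * L * ‖q‖ ^ 2 < ⟪g, q⟫) :
    Tendsto (energyDefect E x g p q h) atTop atTop :=
  tendsto_atTop_mono (quadratic_le_energyDefect hE p q h)
    (tendsto_quadratic_atTop (mul_pos hh (sub_pos.2 hq)) _ _)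

theorem mul_norm_sq_le_inner_of_add_smul_eq {D Q : V →ₗ[ℝ] V} {d c s : ℝ} (hs : 0 ≤ s)
    (hD : ∀ v, d * ‖D v‖ ^ 2 ≤ ⟪v, D v⟫) (hQ : ∀ v, c * ‖v‖ ^ 2 ≤ ⟪v, Q v⟫)
    {g q : V} (hq : q + s • D (Q q) = D g) :
    (d + s * c) * ‖q‖ ^ 2 ≤ ⟪g, q⟫ := by
  have hqD : D (g - s • Q q) = q := by rw [map_sub, map_smul, ← hq, add_sub_cancel_right]
  calc (d + s * c) * ‖q‖ ^ 2 = d * ‖D (g - s • Q q)‖ ^ 2 + s * (c * ‖q‖ ^ 2) := by rw [hqD]; ring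
    _ ≤ ⟪g - s • Q q, D (g - s • Q q)⟫ + s * ⟪q, Q q⟫ := by gcongr; exacts [hD _, hQ q]
    _ = ⟪g, q⟫ := by
      rw [hqD, inner_sub_left, real_inner_smul_left, real_inner_comm q (Q q), sub_add_cancel]

theorem stmt_4_general (hE : IsProximalSubgradient E L x g) {D Q : V →ₗ[ℝ] V} {qmin dmin : ℝ}
    (hQ : ∀ v, qmin * ‖v‖ ^ 2 ≤ ⟪v, Q v⟫) (hD : ∀ v, dmin * ‖D v‖ ^ 2 ≤ ⟪v, D v⟫)
    (hg : D g ≠ 0) {h : ℝ} (hh : 0 < h) (hstep : h * (qmin - L) > -(2 * dmin))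
    (p : V) {q : V} (hq : q + (h / 2) • D (Q q) = D g) :
    Tendsto (energyDefect E x g p q h) atTop atTop := by
  have hq_ne : q ≠ 0 := by
    rintro rfl
    exact hg (by simpa using hq.symm)
  refine tendsto_energyDefect_atTop hE hh p ?_
  calc h / 2 * L * ‖q‖ ^ 2 < (dmin + h / 2 * qmin) * ‖q‖ ^ 2 := by gcongr; linarith
    _ ≤ ⟪g, q⟫ := mul_norm_sq_le_inner_of_add_smul_eq (by positivity) hD hQ hq

end EnergyDefect

/-- Positivity of `F_h` for large `η` (Lemma `lem:ex_gen_pos`). -/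
theorem stmt_4 (n : ℕ) (hn : 1 ≤ n)
    (D Q : Matrix (Fin n) (Fin n) ℝ)
    (hD : ∀ v : EuclideanSpace ℝ (Fin n), v ≠ 0 → 0 < ⟪v, Matrix.toEuclideanLin D v⟫)
    (hQ : Q.IsSymm)
    (E : EuclideanSpace ℝ (Fin n) → ℝ)
    (gE : EuclideanSpace ℝ (Fin n) → EuclideanSpace ℝ (Fin n))
    (hE : ∀ x, HasGradientAt E (gE x) x)
    (LE : ℝ) (hLE : ∀ x y, ‖gE x - gE y‖ ≤ LE * ‖x - y‖)
    (h : ℝ) (hh : 0 < h)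
    (hM : IsUnit ((1 : Matrix (Fin n) (Fin n) ℝ) + (h/2) • (D * Q)))
    (xk : EuclideanSpace ℝ (Fin n)) (hgrad : gE xk ≠ 0)
    (qmin dmin : ℝ)
    (hqmin : ∀ v : EuclideanSpace ℝ (Fin n), qmin * ‖v‖ ^ 2 ≤ ⟪v, Matrix.toEuclideanLin Q v⟫)
    (hdmin : ∀ v : EuclideanSpace ℝ (Fin n), dmin * ‖v‖ ^ 2 ≤ ⟪v, Matrix.toEuclideanLin D⁻¹ v⟫)
    (hstep : h * (qmin - LE) > -(2 * dmin))
    (pk qk : EuclideanSpace ℝ (Fin n))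
    (hpk : pk = Matrix.toEuclideanLin
      (((1 : Matrix (Fin n) (Fin n) ℝ) + (h/2) • (D * Q))⁻¹
        * ((1 : Matrix (Fin n) (Fin n) ℝ) - (h/2) • (D * Q))) xk)
    (hqk : qk = Matrix.toEuclideanLin
      (((1 : Matrix (Fin n) (Fin n) ℝ) + (h/2) • (D * Q))⁻¹ * D) (gE xk))
    (F : ℝ → ℝ)
    (hF : ∀ η : ℝ, F η =
      E (pk - (h * η) • qk) - E xk - η * ⟪gE xk, pk - (h * η) • qk - xk⟫) :
    ∃ η : ℝ, 0 < F η := by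
  have hD_unit : IsUnit D := isUnit_of_inner_toEuclideanLin_ne_zero fun v hv => (hD v hv).ne'
  have hDg : toEuclideanLin D (gE xk) ≠ 0 := fun hzero => by simpa [hzero] using hD _ hgrad
  have hstep_eq : qk + (h / 2) • toEuclideanLin D (toEuclideanLin Q qk) =
      toEuclideanLin D (gE xk) := hqk ▸ add_smul_toEuclideanLin_nonsing_inv_mul hM (gE xk)
  obtain ⟨η, hη⟩ := ((stmt_4_general (isProximalSubgradient_of_norm_sub_le hE (hLE · xk)) hqmin
    (mul_norm_sq_le_inner_of_nonsing_inv hD_unit hdmin) hDg hh hstep pk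
    hstep_eq).eventually_gt_atTop 0).exists
  exact ⟨η, (hF η).symm ▸ hη⟩
end

section
/- Suppose E is continuously differentiable and x_k ∈ ℝⁿ satisfies ⟨∇E(x_k), D∇V(x_k)⟩ ≠ 0, where ∇V(x) = Qx + ∇E(x). Then there exist η_underline ∈ ℝ and h̄ > 0 such that for every h with 0 < h < h̄, the matrix I + (h/2)DQ is invertible and F_h(η_underline; x_k) < 0. -/
open RealInnerProductSpace

/-!
Let `g = ∇E(x)`, `a = ⟨g, D Q x⟩` and `b = ⟨g, D g⟩`. Solving out the implicit step gives
`p - hη q = x - h (I + (h/2) D Q)⁻¹ (D Q x + η D g)`, which equals `x` at `h = 0` with velocity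
`-(D Q x + η D g)`. Hence `F_h(η)` vanishes at `h = 0` and has `h`-derivative `(η - 1) (a + η b)`
there. As a function of `η`, this derivative has a simple zero at `η = 1`, because
`a + b = ⟨g, D ∇V(x)⟩ ≠ 0`, so it is negative for some `η` close to `1`.
-/

open Topology

theorem exists_sub_one_mul_add_mul_neg {K : Type*} [Field K] [LinearOrder K]
    [IsStrictOrderedRing K] {a b : K} (hab : a + b ≠ 0) : ∃ η, (η - 1) * (a + η * b) < 0 := by
  -- Step from the zero `η = 1` against the sign of the slope `a + b`; `1 + b ^ 2` makes the step
  -- short enough to stay before the other zero.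
  have hb : b < 1 + b ^ 2 := by nlinarith [sq_nonneg (b - 1)]
  refine ⟨1 - (a + b) / (1 + b ^ 2), ?_⟩
  calc (1 - (a + b) / (1 + b ^ 2) - 1) * (a + (1 - (a + b) / (1 + b ^ 2)) * b)
      = -((a + b) ^ 2 * (1 + b ^ 2 - b) / (1 + b ^ 2) ^ 2) := by field_simp; ring
    _ < 0 := neg_neg_of_pos (by have := sub_pos.2 hb; positivity)

theorem eventually_neg_nhdsGT_of_hasDerivAt {f : ℝ → ℝ} {f' x : ℝ} (hf : HasDerivAt f f' x)
    (hfx : f x = 0) (hf' : f' < 0) : ∀ᶠ y in 𝓝[>] x, f y < 0 := by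
  have hsign := eventually_nhdsWithin_sign_eq_of_deriv_neg (hf.deriv.trans_lt hf') hfx
  filter_upwards [hsign.filter_mono nhdsWithin_le_nhds, self_mem_nhdsWithin] with y hy hxy
  rwa [sign_neg (sub_neg.2 hxy), sign_eq_neg_one_iff] at hy

section Calculus

variable {𝕜 X : Type*} [NontriviallyNormedField 𝕜] [NormedAddCommGroup X] [NormedSpace 𝕜 X]

theorem hasDerivAt_add_smul_ringInverse_apply [CompleteSpace X] {M : 𝕜 → X →L[𝕜] X}
    (hM : DifferentiableAt 𝕜 M 0) (hM_unit : IsUnit (M 0)) (x u : X) :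
    HasDerivAt (fun h => x + h • Ring.inverse (M h) u) (Ring.inverse (M 0) u) 0 := by
  have hinv : DifferentiableAt 𝕜 (fun h => Ring.inverse (M h)) 0 :=
    (differentiableAt_inverse (𝕜 := 𝕜) hM_unit).fun_comp' 0 hM
  simpa using
    ((hasDerivAt_id (0 : 𝕜)).smul (hinv.hasDerivAt.clm_apply (hasDerivAt_const 0 u))).const_add x

theorem hasDerivAt_sub_sub_mul_of_hasFDerivAt {E : X → 𝕜} {dE : X →L[𝕜] 𝕜} {y : 𝕜 → X} {t : 𝕜}
    {u : X} (hE : HasFDerivAt E dE (y t)) (hy : HasDerivAt y u t) (η : 𝕜) :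
    HasDerivAt (fun s => E (y s) - E (y t) - η * dE (y s - y t)) ((1 - η) * dE u) t := by
  have hlin := (dE.hasFDerivAt.comp_hasDerivAt t (hy.sub_const (y t))).const_mul η
  rw [one_sub_mul]
  exact ((hE.comp_hasDerivAt t hy).sub_const (E (y t))).sub hlin

theorem sub_smul_eq_add_smul_ringInverse_apply [CharZero 𝕜] {A : X →L[𝕜] X} {h : 𝕜} (η : 𝕜)
    {x w p q : X} (hunit : IsUnit (1 + (h / 2) • A))
    (hp : (1 + (h / 2) • A) p = (1 - (h / 2) • A) x) (hq : (1 + (h / 2) • A) q = w) :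
    p - (h * η) • q = x + h • Ring.inverse (1 + (h / 2) • A) (-(A x + η • w)) := by
  have hsolve : (1 + (h / 2) • A) (p - (h * η) • q - x) = h • -(A x + η • w) := by
    simp only [map_sub, map_smul, hp, hq, add_apply, sub_apply, smul_apply, one_apply_eq_self]
    module
  rw [← map_smul, ← hsolve, ← mul_apply_eq_comp, Ring.inverse_mul_cancel _ hunit,
    one_apply_eq_self, add_sub_cancel]

end Calculus

section ImplicitStep

variable {X : Type*} [NormedAddCommGroup X] [NormedSpace ℝ X] [CompleteSpace X] {E : X → ℝ}
  {dE : X →L[ℝ] ℝ} {x : X}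

theorem eventually_isUnit_and_sub_sub_mul_neg (hE : HasFDerivAt E dE x) (A : X →L[ℝ] X) (w : X)
    {η : ℝ} (hη : (η - 1) * (dE (A x) + η * dE w) < 0) :
    ∀ᶠ h : ℝ in 𝓝[>] 0, IsUnit (1 + (h / 2) • A) ∧ ∀ p q : X,
      (1 + (h / 2) • A) p = (1 - (h / 2) • A) x → (1 + (h / 2) • A) q = w →
      E (p - (h * η) • q) - E x - η * dE (p - (h * η) • q - x) < 0 := by
  have hdiff : Differentiable ℝ fun h : ℝ => 1 + (h / 2) • A := by fun_prop
  have hunit : ∀ᶠ h : ℝ in 𝓝 0, IsUnit (1 + (h / 2) • A) :=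
    hdiff.continuous.continuousAt.eventually (Units.isOpen.mem_nhds (by simp))
  set u := -(A x + η • w) with hu
  have hslope : (1 - η) * dE u < 0 := by
    calc (1 - η) * dE u = (η - 1) * (dE (A x) + η * dE w) := by
          rw [hu, map_neg, map_add, map_smul, smul_eq_mul]; ring
      _ < 0 := hη
  let y : ℝ → X := fun h => x + h • Ring.inverse (1 + (h / 2) • A) u
  have hy_zero : y 0 = x := by simp [y]
  have hy : HasDerivAt y u 0 := by
    simpa [y] using hasDerivAt_add_smul_ringInverse_apply (hdiff 0) (by simp) x u
  have hneg := eventually_neg_nhdsGT_of_hasDerivAt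
    (hasDerivAt_sub_sub_mul_of_hasFDerivAt (hy_zero.symm ▸ hE) hy η) (by simp) hslope
  filter_upwards [hneg, hunit.filter_mono nhdsWithin_le_nhds] with h hFneg hinv
  refine ⟨hinv, fun p q hp hq => ?_⟩
  rw [sub_smul_eq_add_smul_ringInverse_apply η hinv hp hq, ← hu]
  simpa only [hy_zero] using hFneg

/-- In the notation of `stmt_5`, `A` is `D Q` and `w` is `D ∇E(x)`. -/
theorem stmt_5_general (hE : HasFDerivAt E dE x) (A : X →L[ℝ] X) (w : X)
    (hne : dE (A x + w) ≠ 0) :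
    ∃ η δ : ℝ, 0 < δ ∧ ∀ h : ℝ, 0 < h → h < δ →
      IsUnit (1 + (h / 2) • A) ∧ ∀ p q : X,
        (1 + (h / 2) • A) p = (1 - (h / 2) • A) x → (1 + (h / 2) • A) q = w →
        E (p - (h * η) • q) - E x - η * dE (p - (h * η) • q - x) < 0 := by
  rw [map_add] at hne
  obtain ⟨η, hη⟩ := exists_sub_one_mul_add_mul_neg hne
  obtain ⟨δ, hδ, hstep⟩ := mem_nhdsGT_iff_exists_Ioo_subset.1
    (eventually_isUnit_and_sub_sub_mul_neg hE A w hη)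
  exact ⟨η, δ, hδ, fun h h_pos h_lt => hstep ⟨h_pos, h_lt⟩⟩

end ImplicitStep

theorem toEuclideanCLM_apply_toEuclideanLin_inv_mul {𝕜 ι : Type*} [RCLike 𝕜] [Fintype ι]
    [DecidableEq ι] {M : Matrix ι ι 𝕜} (hM : IsUnit M) (N : Matrix ι ι 𝕜)
    (v : EuclideanSpace 𝕜 ι) :
    Matrix.toEuclideanCLM (n := ι) (𝕜 := 𝕜) M (Matrix.toEuclideanLin (M⁻¹ * N) v) =
      Matrix.toEuclideanCLM (n := ι) (𝕜 := 𝕜) N v := by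
  change Matrix.toEuclideanLin M _ = Matrix.toEuclideanLin N v
  rw [← LinearMap.comp_apply, ← Matrix.toLpLin_mul_same,
    Matrix.mul_nonsing_inv_cancel_left _ _ ((Matrix.isUnit_iff_isUnit_det M).1 hM)]

/-- Negativity of `F_h` at some `η` for small `h` (Lemma `lem:ex_gen_neg`). -/
theorem stmt_5 (n : ℕ) (hn : 1 ≤ n)
    (D Q : Matrix (Fin n) (Fin n) ℝ)
    (hD : ∀ v : EuclideanSpace ℝ (Fin n), v ≠ 0 → 0 < ⟪v, Matrix.toEuclideanLin D v⟫)
    (hQ : Q.IsSymm)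
    (E : EuclideanSpace ℝ (Fin n) → ℝ)
    (gE : EuclideanSpace ℝ (Fin n) → EuclideanSpace ℝ (Fin n))
    (hE : ∀ x, HasGradientAt E (gE x) x)
    (hgEcont : Continuous gE)
    (xk : EuclideanSpace ℝ (Fin n))
    (hne : ⟪gE xk, Matrix.toEuclideanLin D (Matrix.toEuclideanLin Q xk + gE xk)⟫ ≠ 0)
    (pk qk : ℝ → EuclideanSpace ℝ (Fin n))
    (hpk : ∀ h : ℝ, pk h = Matrix.toEuclideanLin
      (((1 : Matrix (Fin n) (Fin n) ℝ) + (h/2) • (D * Q))⁻¹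
        * ((1 : Matrix (Fin n) (Fin n) ℝ) - (h/2) • (D * Q))) xk)
    (hqk : ∀ h : ℝ, qk h = Matrix.toEuclideanLin
      (((1 : Matrix (Fin n) (Fin n) ℝ) + (h/2) • (D * Q))⁻¹ * D) (gE xk))
    (F : ℝ → ℝ → ℝ)
    (hF : ∀ h η : ℝ, F h η =
      E (pk h - (h * η) • qk h) - E xk
        - η * ⟪gE xk, pk h - (h * η) • qk h - xk⟫) :
    ∃ ηlow : ℝ, ∃ hbar : ℝ, 0 < hbar ∧ ∀ h : ℝ, 0 < h → h < hbar →
      IsUnit ((1 : Matrix (Fin n) (Fin n) ℝ) + (h/2) • (D * Q)) ∧ F h ηlow < 0 := by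
  let L := Matrix.toEuclideanCLM (n := Fin n) (𝕜 := ℝ)
  have hne' : InnerProductSpace.toDual ℝ _ (gE xk) (L (D * Q) xk + L D (gE xk)) ≠ 0 := by
    rwa [map_mul, mul_apply_eq_comp, ← map_add]
  obtain ⟨η, δ, hδ, hstep⟩ := stmt_5_general (hE xk) (L (D * Q)) (L D (gE xk)) hne'
  refine ⟨η, δ, hδ, fun h h_pos h_lt => ?_⟩
  obtain ⟨hunit, hneg⟩ := hstep h h_pos h_lt
  have hplus : 1 + (h / 2) • L (D * Q) = L (1 + (h / 2) • (D * Q)) := by simp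
  have hminus : 1 - (h / 2) • L (D * Q) = L (1 - (h / 2) • (D * Q)) := by simp
  rw [hplus, isUnit_map_iff] at hunit
  rw [hplus, hminus] at hneg
  have hp := toEuclideanCLM_apply_toEuclideanLin_inv_mul hunit (1 - (h / 2) • (D * Q)) xk
  have hq := toEuclideanCLM_apply_toEuclideanLin_inv_mul hunit D (gE xk)
  rw [← hpk] at hp
  rw [← hqk] at hq
  exact ⟨hunit, hF h η ▸ hneg (pk h) (qk h) hp hq⟩
end

section
/- Suppose E is L_E-smooth (∇E is L_E-Lipschitz) and continuously differentiable, and x_k ∈ ℝⁿ satisfies ⟨∇E(x_k), D∇V(x_k)⟩ ≠ 0, where ∇V(x) = Qx + ∇E(x). Then there exists h̄ > 0 such that for every h with 0 < h < h̄, the matrix I + (h/2)DQ is invertible and there exists η_k ∈ ℝ with F_h(η_k; x_k) = 0; i.e., the Lagrange multiplier scheme x_{k+1} = p_k − hη_k q_k has a solution. -/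
open RealInnerProductSpace

/-!
Write the trial point as `x + h • (u h + η • v h)`, where `u` and `v` are continuous at `h = 0`.
To first order in `h` the multiplier equation then reads `(1 - η) * E' (u 0 + η • v 0) = 0`. Its
left side is a polynomial in `η` with a root at `η = 1`, and the root is simple because
`E' (u 0 + v 0) ≠ 0`. So it takes values of both signs near `η = 1`, the residual divided by `h`
does the same for all small `h ≠ 0`, and the intermediate value theorem gives a solution `η`.
-/

open Filter Topology
open scoped Ring

lemma exists_one_sub_mul_add_mul_neg_and_pos {c d : ℝ} (hcd : c + d ≠ 0) :
    (∃ η : ℝ, (1 - η) * (c + η * d) < 0) ∧ ∃ η : ℝ, 0 < (1 - η) * (c + η * d) := by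
  have expand (t : ℝ) : (1 - (1 + t * (c + d))) * (c + (1 + t * (c + d)) * d) =
      -t * (1 + t * d) * (c + d) ^ 2 := by ring
  have hsq : 0 < (c + d) ^ 2 := by positivity
  have ht : 0 < (1 + |d|)⁻¹ := by positivity
  have hsmall : |(1 + |d|)⁻¹ * d| < 1 := by
    rw [abs_mul, abs_of_pos ht, inv_mul_lt_one₀ (by positivity)]
    linarith
  obtain ⟨hlower, hupper⟩ := abs_lt.1 hsmall
  refine ⟨⟨1 + (1 + |d|)⁻¹ * (c + d), ?_⟩, ⟨1 + -(1 + |d|)⁻¹ * (c + d), ?_⟩⟩ <;> rw [expand]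
  · exact mul_neg_of_neg_of_pos (mul_neg_of_neg_of_pos (by linarith) (by linarith)) hsq
  · exact mul_pos (mul_pos (by linarith) (by linarith)) hsq

lemma tendsto_inv_smul_sub_of_hasFDerivAt {𝕜 V W : Type*} [NontriviallyNormedField 𝕜]
    [NormedAddCommGroup V] [NormedSpace 𝕜 V] [NormedAddCommGroup W] [NormedSpace 𝕜 W]
    {f : V → W} {f' : V →L[𝕜] W} {x : V} (hf : HasFDerivAt f f' x) {z : 𝕜 → V}
    (hz : ContinuousAt z 0) :
    Tendsto (fun h => h⁻¹ • (f (x + h • z h) - f x)) (𝓝[≠] 0) (𝓝 (f' (z 0))) := by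
  have hz' : Tendsto z (𝓝[≠] 0) (𝓝 (z 0)) := hz.tendsto.mono_left nhdsWithin_le_nhds
  have hid : Tendsto (fun h : 𝕜 => h) (𝓝[≠] 0) (𝓝 0) := nhdsWithin_le_nhds
  refine hf.hasFDerivWithinAt.lim (s := Set.univ) (by simpa using hid.smul hz') (by simp) ?_
  refine hz'.congr' ?_
  filter_upwards [self_mem_nhdsWithin] with h hh
  rw [inv_smul_smul₀ hh]

section RingInverse

lemma ringInverse_one_add_mul_one_sub {R : Type*} [Ring R] {a : R} (ha : IsUnit (1 + a)) :
    (1 + a)⁻¹ʳ * (1 - a) = 1 - (1 + a)⁻¹ʳ * (2 * a) := by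
  have hsub : 1 - a = (1 + a) - 2 * a := by noncomm_ring
  rw [hsub, mul_sub, Ring.inverse_mul_cancel _ ha]

lemma map_ringInverse {M N F : Type*} [MonoidWithZero M] [MonoidWithZero N] [EquivLike F M N]
    [MulEquivClass F M N] (e : F) (a : M) : e a⁻¹ʳ = (e a)⁻¹ʳ := by
  by_cases ha : IsUnit a
  · obtain ⟨u, rfl⟩ := ha
    have hmap : e u = Units.map (e : M →* N) u := rfl
    rw [hmap, Ring.inverse_unit, Ring.inverse_unit, ← map_inv]
    rfl
  · rw [Ring.inverse_non_unit _ ha, Ring.inverse_non_unit _ (by simpa using ha), map_zero]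

variable {𝕜 R : Type*} [NontriviallyNormedField 𝕜] [NormedRing R] [HasSummableGeomSeries R]
  [NormedAlgebra 𝕜 R]

lemma eventually_isUnit_one_add_smul (a : R) : ∀ᶠ t : 𝕜 in 𝓝 0, IsUnit (1 + t • a) := by
  have hlim : ContinuousAt (fun t : 𝕜 => 1 + t • a) 0 := by fun_prop
  exact hlim.eventually_mem (by simpa using Units.nhds (1 : Rˣ))

lemma continuousAt_ringInverse_one_add_smul (a : R) :
    ContinuousAt (fun t : 𝕜 => (1 + t • a)⁻¹ʳ) 0 := by
  refine ContinuousAt.comp (g := Ring.inverse) ?_ (by fun_prop)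
  simpa using NormedRing.inverse_continuousAt (1 : Rˣ)

end RingInverse

lemma toEuclideanLin_inv_mul_apply {𝕜 n : Type*} [RCLike 𝕜] [Fintype n] [DecidableEq n]
    (M N : Matrix n n 𝕜) (v : EuclideanSpace 𝕜 n) :
    Matrix.toEuclideanLin (M⁻¹ * N) v =
      ((Matrix.toEuclideanCLM (𝕜 := 𝕜) M)⁻¹ʳ * Matrix.toEuclideanCLM (𝕜 := 𝕜) N) v := by
  rw [Matrix.nonsing_inv_eq_ringInverse, ← map_ringInverse, ← map_mul]
  rfl

section MultiplierResidual

variable {V : Type*} [NormedAddCommGroup V] [NormedSpace ℝ V] {E : V → ℝ} {E' : StrongDual ℝ V}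
  {x : V}

/-- The defect at the trial point `y` of the discrete energy balance
`E y - E x = η * E' (y - x)`, which determines the Lagrange multiplier `η` of a step starting
at `x`. In `stmt_6`, `F h η` is this defect at `y = pk h - (h * η) • qk h`, where `E'` pairs
with the gradient of `E` at `xk`. -/
def multiplierResidual (E : V → ℝ) (E' : StrongDual ℝ V) (x : V) (η : ℝ) (y : V) : ℝ :=
  E y - E x - η * E' (y - x)

lemma multiplierResidual_self (η : ℝ) : multiplierResidual E E' x η x = 0 := by
  simp [multiplierResidual]

lemma hasFDerivAt_multiplierResidual (hE' : HasFDerivAt E E' x) (η : ℝ) :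
    HasFDerivAt (multiplierResidual E E' x η) ((1 - η) • E') x := by
  have hlin : HasFDerivAt (fun y => E' (y - x)) E' x := by
    simpa only [map_sub] using E'.hasFDerivAt.sub_const (E' x)
  exact ((hE'.sub_const (E x)).sub (hlin.const_mul η)).congr_fderiv (by module)

lemma tendsto_inv_mul_multiplierResidual (hE' : HasFDerivAt E E' x) (η : ℝ) {z : ℝ → V}
    (hz : ContinuousAt z 0) :
    Tendsto (fun h => h⁻¹ * multiplierResidual E E' x η (x + h • z h)) (𝓝[≠] 0)
      (𝓝 ((1 - η) * E' (z 0))) := by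
  simpa [multiplierResidual_self] using
    tendsto_inv_smul_sub_of_hasFDerivAt (hasFDerivAt_multiplierResidual hE' η) hz

theorem eventually_exists_multiplierResidual_eq_zero (hE : Continuous E)
    (hE' : HasFDerivAt E E' x) {u v : ℝ → V} (hu : ContinuousAt u 0) (hv : ContinuousAt v 0)
    (hne : E' (u 0 + v 0) ≠ 0) :
    ∀ᶠ h in 𝓝 (0 : ℝ), ∃ η, multiplierResidual E E' x η (x + h • (u h + η • v h)) = 0 := by
  have hlim (η : ℝ) :
      Tendsto (fun h => h⁻¹ * multiplierResidual E E' x η (x + h • (u h + η • v h))) (𝓝[≠] 0)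
        (𝓝 ((1 - η) * (E' (u 0) + η * E' (v 0)))) := by
    simpa using tendsto_inv_mul_multiplierResidual hE' η (hu.add (hv.const_smul η))
  obtain ⟨⟨η₁, hη₁⟩, η₂, hη₂⟩ := exists_one_sub_mul_add_mul_neg_and_pos (map_add E' _ _ ▸ hne)
  have hpunctured : ∀ᶠ h in 𝓝[≠] (0 : ℝ),
      ∃ η, multiplierResidual E E' x η (x + h • (u h + η • v h)) = 0 := by
    filter_upwards [(hlim η₁).eventually_le_const hη₁, (hlim η₂).eventually_const_le hη₂,
      self_mem_nhdsWithin] with h hneg hpos hh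
    have hcont : Continuous fun η : ℝ =>
        h⁻¹ * multiplierResidual E E' x η (x + h • (u h + η • v h)) := by
      unfold multiplierResidual
      fun_prop
    obtain ⟨η, hη⟩ := mem_range_of_exists_le_of_exists_ge hcont ⟨η₁, hneg⟩ ⟨η₂, hpos⟩
    exact ⟨η, (mul_eq_zero.1 hη).resolve_left (inv_ne_zero hh)⟩
  rw [eventually_nhdsWithin_iff] at hpunctured
  filter_upwards [hpunctured] with h hsol
  obtain rfl | hh := eq_or_ne h 0
  · exact ⟨0, by simp [multiplierResidual_self]⟩
  · exact hsol hh

end MultiplierResidual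

/-- In `stmt_6`, `A` is the product `D * Q` and `w` is `D` applied to the gradient of `E`. -/
theorem stmt_6_general {V : Type*} [NormedAddCommGroup V] [NormedSpace ℝ V] [CompleteSpace V]
    {E : V → ℝ} {E' : StrongDual ℝ V} {x : V} (hE : Continuous E) (hE' : HasFDerivAt E E' x)
    (A : V →L[ℝ] V) (w : V) (hne : E' (A x + w) ≠ 0) :
    ∀ᶠ h : ℝ in 𝓝 0, IsUnit (1 + (h / 2) • A) ∧ ∃ η : ℝ, multiplierResidual E E' x η
      (((1 + (h / 2) • A)⁻¹ʳ * (1 - (h / 2) • A)) x - (h * η) • (1 + (h / 2) • A)⁻¹ʳ w) = 0 := by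
  have hhalf : ContinuousAt (fun h : ℝ => h / 2) 0 := by fun_prop
  have hinv : ContinuousAt (fun h : ℝ => (1 + (h / 2) • A)⁻¹ʳ) 0 :=
    (continuousAt_ringInverse_one_add_smul A).comp_of_eq hhalf (zero_div 2)
  have hinv_zero : (1 + ((0 : ℝ) / 2) • A)⁻¹ʳ = 1 := by simp
  have happly (y : V) : ContinuousAt (fun h : ℝ => -(1 + (h / 2) • A)⁻¹ʳ y) 0 :=
    (hinv.clm_apply continuousAt_const).neg
  have hne_zero : E' (-(1 + ((0 : ℝ) / 2) • A)⁻¹ʳ (A x) + -(1 + ((0 : ℝ) / 2) • A)⁻¹ʳ w) ≠ 0 := by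
    rwa [hinv_zero, ← neg_add, map_neg, neg_ne_zero]
  filter_upwards [hhalf.eventually (by simpa using eventually_isUnit_one_add_smul A),
    eventually_exists_multiplierResidual_eq_zero hE hE' (happly (A x)) (happly w) hne_zero]
    with h hunit ⟨η, hη⟩
  have htwo : (2 : V →L[ℝ] V) * (h / 2) • A = h • A := by
    rw [two_mul]
    module
  have hpoint : ((1 + (h / 2) • A)⁻¹ʳ * (1 - (h / 2) • A)) x - (h * η) • (1 + (h / 2) • A)⁻¹ʳ w =
      x + h • (-(1 + (h / 2) • A)⁻¹ʳ (A x) + η • -(1 + (h / 2) • A)⁻¹ʳ w) := by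
    rw [ringInverse_one_add_mul_one_sub hunit, htwo]
    simp only [sub_apply, one_apply_eq_self, mul_apply_eq_comp, smul_apply, map_smul]
    module
  exact ⟨hunit, η, hpoint ▸ hη⟩

/-- Existence of a solution of the Lagrange multiplier scheme (Theorem `thm:ex_gen`). -/
theorem stmt_6 (n : ℕ) (hn : 1 ≤ n)
    (D Q : Matrix (Fin n) (Fin n) ℝ)
    (hD : ∀ v : EuclideanSpace ℝ (Fin n), v ≠ 0 → 0 < ⟪v, Matrix.toEuclideanLin D v⟫)
    (hQ : Q.IsSymm)
    (E : EuclideanSpace ℝ (Fin n) → ℝ)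
    (gE : EuclideanSpace ℝ (Fin n) → EuclideanSpace ℝ (Fin n))
    (hE : ∀ x, HasGradientAt E (gE x) x)
    (hgEcont : Continuous gE)
    (LE : ℝ) (hLE : ∀ x y, ‖gE x - gE y‖ ≤ LE * ‖x - y‖)
    (xk : EuclideanSpace ℝ (Fin n))
    (hne : ⟪gE xk, Matrix.toEuclideanLin D (Matrix.toEuclideanLin Q xk + gE xk)⟫ ≠ 0)
    (pk qk : ℝ → EuclideanSpace ℝ (Fin n))
    (hpk : ∀ h : ℝ, pk h = Matrix.toEuclideanLin
      (((1 : Matrix (Fin n) (Fin n) ℝ) + (h/2) • (D * Q))⁻¹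
        * ((1 : Matrix (Fin n) (Fin n) ℝ) - (h/2) • (D * Q))) xk)
    (hqk : ∀ h : ℝ, qk h = Matrix.toEuclideanLin
      (((1 : Matrix (Fin n) (Fin n) ℝ) + (h/2) • (D * Q))⁻¹ * D) (gE xk))
    (F : ℝ → ℝ → ℝ)
    (hF : ∀ h η : ℝ, F h η =
      E (pk h - (h * η) • qk h) - E xk
        - η * ⟪gE xk, pk h - (h * η) • qk h - xk⟫) :
    ∃ hbar : ℝ, 0 < hbar ∧ ∀ h : ℝ, 0 < h → h < hbar →
      IsUnit ((1 : Matrix (Fin n) (Fin n) ℝ) + (h/2) • (D * Q)) ∧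
      ∃ η : ℝ, F h η = 0 := by
  have hEcont : Continuous E := continuous_iff_continuousAt.2 fun x => (hE x).continuousAt
  have hne' : InnerProductSpace.toDual ℝ _ (gE xk) (Matrix.toEuclideanCLM (𝕜 := ℝ) (D * Q) xk +
      Matrix.toEuclideanCLM (𝕜 := ℝ) D (gE xk)) ≠ 0 := by
    rw [map_add] at hne
    rwa [map_mul]
  obtain ⟨hbar, hpos, hsol⟩ := Metric.eventually_nhds_iff.1
    (stmt_6_general hEcont (hE xk).hasFDerivAt _ _ hne')
  refine ⟨hbar, hpos, fun h h0 hlt => ?_⟩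
  obtain ⟨hunit, η, hη⟩ := hsol (y := h) (by simpa [abs_of_pos h0] using hlt)
  refine ⟨(MulEquiv.isUnit_map (Matrix.toEuclideanCLM (n := Fin n) (𝕜 := ℝ))).1
    (by simpa using hunit), η, ?_⟩
  rw [hF, hpk, hqk, toEuclideanLin_inv_mul_apply, toEuclideanLin_inv_mul_apply]
  simp only [map_add, map_sub, map_one, map_smul]
  exact hη
end

section
/- For every h > 0 and every x_k ∈ ℝⁿ, there exists η_k ∈ ℝ satisfying F_h(η_k; x_k) = 0 and η_k ≥ η_LB = (1 + Lh/2)⁻¹ > 0. -/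
open RealInnerProductSpace

/-!
By the descent lemma, `f (x - t ∇f x) ≤ f x - t (1 - L t / 2) ‖∇f x‖²`, so with `t = η h`
the residual satisfies `F_h(η; x) ≤ h η (η (1 + L h / 2) - 1) ‖∇f x‖²`, and this bound vanishes at
`η = (1 + L h / 2)⁻¹`. If `∇f x ≠ 0`, boundedness below of `f` lets the quadratic term of `F_h`
dominate as `η → ∞`, and the intermediate value theorem gives a root at or to the right of that
point. If `∇f x = 0`, then `F_h(·; x)` is identically zero.
-/

open Filter Set

section Taylor

variable {E G : Type*} [NormedAddCommGroup E] [NormedSpace ℝ E] [NormedAddCommGroup G]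
  [NormedSpace ℝ G] {f : E → G} {f' : E → E →L[ℝ] G} {s : Set E} {x y : E} {L : ℝ}

theorem norm_image_sub_sub_le_of_starConvex (hs : StarConvex ℝ x s)
    (hf : ∀ z ∈ s, HasFDerivWithinAt f (f' z) s z)
    (hLip : ∀ z ∈ s, ‖f' z - f' x‖ ≤ L * ‖z - x‖) (hy : y ∈ s) :
    ‖f y - f x - f' x (y - x)‖ ≤ L / 2 * ‖y - x‖ ^ 2 := by
  have mapsTo_s : MapsTo (fun t : ℝ ↦ x + t • (y - x)) (Icc 0 1) s :=
    fun t ht ↦ hs.add_smul_sub_mem hy ht.1 ht.2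
  have hasDeriv_remainder : ∀ t ∈ Icc (0 : ℝ) 1,
      HasDerivWithinAt (fun t : ℝ ↦ f (x + t • (y - x)) - f x - t • f' x (y - x))
        ((f' (x + t • (y - x)) - f' x) (y - x)) (Icc 0 1) t := by
    intro t ht
    have hline : HasDerivWithinAt (fun t : ℝ ↦ x + t • (y - x)) (y - x) (Icc 0 1) t := by
      simpa using (((hasDerivAt_id t).smul_const (y - x)).const_add x).hasDerivWithinAt
    have hlinear : HasDerivWithinAt (fun t : ℝ ↦ t • f' x (y - x)) (f' x (y - x)) (Icc 0 1) t := by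
      simpa using ((hasDerivAt_id t).smul_const (f' x (y - x))).hasDerivWithinAt
    have hcomp := (hf _ (mapsTo_s ht)).comp_hasDerivWithinAt t hline mapsTo_s
    exact (hcomp.sub_const (f x)).sub hlinear
  have hasDeriv_bound (t : ℝ) :
      HasDerivAt (fun t : ℝ ↦ L / 2 * ‖y - x‖ ^ 2 * t ^ 2) (L * ‖y - x‖ ^ 2 * t) t :=
    ((hasDerivAt_pow 2 t).const_mul (L / 2 * ‖y - x‖ ^ 2)).congr_deriv (by push_cast; ring)
  have norm_deriv_le : ∀ t ∈ Ico (0 : ℝ) 1,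
      ‖(f' (x + t • (y - x)) - f' x) (y - x)‖ ≤ L * ‖y - x‖ ^ 2 * t := by
    intro t ht
    calc ‖(f' (x + t • (y - x)) - f' x) (y - x)‖
        ≤ ‖f' (x + t • (y - x)) - f' x‖ * ‖y - x‖ := ContinuousLinearMap.le_opNorm _ _
      _ ≤ L * ‖x + t • (y - x) - x‖ * ‖y - x‖ := by
        gcongr
        exact hLip _ (mapsTo_s (Ico_subset_Icc_self ht))
      _ = L * ‖y - x‖ ^ 2 * t := by
        rw [add_sub_cancel_left, norm_smul, Real.norm_of_nonneg ht.1]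
        ring
  simpa using image_norm_le_of_norm_deriv_right_le_deriv_boundary
    (fun t ht ↦ (hasDeriv_remainder t ht).continuousWithinAt)
    (fun t ht ↦ (hasDeriv_remainder t (Ico_subset_Icc_self ht)).mono_of_mem_nhdsWithin
      (Icc_mem_nhdsGE_of_mem ht))
    (by simp) hasDeriv_bound norm_deriv_le (right_mem_Icc.2 zero_le_one)

end Taylor

section Residual

variable {E : Type*} [NormedAddCommGroup E] [NormedSpace ℝ E]
  {f : E → ℝ} {f' : E → E} {x : E} {h : ℝ}

/-- The residual `F_h(η; x)` of the discrete energy balance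
`f (x - ηh∇f(x)) - f x = -h η² ‖∇f(x)‖²`; the function `f'` stands for the gradient of `f`. -/
def dissipationResidual (f : E → ℝ) (f' : E → E) (h : ℝ) (x : E) (η : ℝ) : ℝ :=
  f (x - (η * h) • f' x) - f x + h * η ^ 2 * ‖f' x‖ ^ 2

theorem continuous_dissipationResidual (hf : Continuous f) (f' : E → E) (h : ℝ) (x : E) :
    Continuous (dissipationResidual f f' h x) := by
  unfold dissipationResidual
  fun_prop

theorem dissipationResidual_eq_zero_of_gradient_eq_zero (f : E → ℝ) (h η : ℝ) (hx : f' x = 0) :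
    dissipationResidual f f' h x η = 0 := by
  simp [dissipationResidual, hx]

theorem tendsto_dissipationResidual_atTop (hbdd : BddBelow (range f)) (hh : 0 < h)
    (hx : f' x ≠ 0) : Tendsto (dissipationResidual f f' h x) atTop atTop := by
  obtain ⟨m, hm⟩ := hbdd
  have hquadratic : Tendsto (fun η : ℝ ↦ h * η ^ 2 * ‖f' x‖ ^ 2) atTop atTop :=
    ((tendsto_pow_atTop two_ne_zero).const_mul_atTop hh).atTop_mul_const (by positivity)
  exact tendsto_atTop_add_left_of_le _ (m - f x)
    (fun _ ↦ sub_le_sub_right (hm (mem_range_self _)) _) hquadratic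

end Residual

section GradientStep

variable {E : Type*} [NormedAddCommGroup E] [InnerProductSpace ℝ E] [CompleteSpace E]
  {f : E → ℝ} {f' : E → E} {x : E} {h L : ℝ}

theorem image_sub_smul_gradient_le (hf : ∀ y, HasGradientAt f (f' y) y)
    (hLip : ∀ y, ‖f' y - f' x‖ ≤ L * ‖y - x‖) (t : ℝ) :
    f (x - t • f' x) ≤ f x - t * (1 - L * t / 2) * ‖f' x‖ ^ 2 := by
  have htaylor := norm_image_sub_sub_le_of_starConvex (y := x - t • f' x) (starConvex_univ x)
    (fun z _ ↦ (hf z).hasFDerivAt.hasFDerivWithinAt)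
    (fun z _ ↦ by simpa only [← map_sub, LinearIsometryEquiv.norm_map] using hLip z) (mem_univ _)
  have hstep : x - t • f' x - x = -(t • f' x) := by abel
  rw [hstep, norm_neg, norm_smul, mul_pow, Real.norm_eq_abs t, sq_abs, map_neg, map_smul,
    InnerProductSpace.toDual_apply_apply, real_inner_self_eq_norm_sq, smul_eq_mul] at htaylor
  linarith [(Real.le_norm_self _).trans htaylor]

theorem dissipationResidual_le_mul_norm_sq (hf : ∀ y, HasGradientAt f (f' y) y)
    (hLip : ∀ y, ‖f' y - f' x‖ ≤ L * ‖y - x‖) (h η : ℝ) :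
    dissipationResidual f f' h x η ≤ h * η * (η * (1 + L * h / 2) - 1) * ‖f' x‖ ^ 2 := by
  unfold dissipationResidual
  linarith [image_sub_smul_gradient_le hf hLip (η * h)]

theorem stmt_7_general (hf : ∀ y, HasGradientAt f (f' y) y) (hbdd : BddBelow (range f))
    (hL : 0 ≤ L) (hLip : ∀ y, ‖f' y - f' x‖ ≤ L * ‖y - x‖) (hh : 0 < h) :
    ∃ η : ℝ, dissipationResidual f f' h x η = 0 ∧
      (1 + L * h / 2)⁻¹ ≤ η ∧ 0 < (1 + L * h / 2)⁻¹ := by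
  have hpos : 0 < 1 + L * h / 2 := by positivity
  rcases eq_or_ne (f' x) 0 with hx | hx
  · exact ⟨_, dissipationResidual_eq_zero_of_gradient_eq_zero f h _ hx, le_rfl, inv_pos.2 hpos⟩
  have hnonpos : dissipationResidual f f' h x (1 + L * h / 2)⁻¹ ≤ 0 := by
    simpa [inv_mul_cancel₀ hpos.ne'] using
      dissipationResidual_le_mul_norm_sq hf hLip h (1 + L * h / 2)⁻¹
  have hcont : Continuous (dissipationResidual f f' h x) :=
    continuous_dissipationResidual
      (continuous_iff_continuousAt.2 fun y ↦ (hf y).continuousAt) f' h x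
  obtain ⟨η, hη, hroot⟩ := isPreconnected_Ici.intermediate_value_Ici self_mem_Ici
    (le_principal_iff.2 (Ici_mem_atTop _)) hcont.continuousOn
    (tendsto_dissipationResidual_atTop hbdd hh hx) hnonpos
  exact ⟨η, hroot, hη, inv_pos.2 hpos⟩

end GradientStep

/-- Existence of a solution with a lower bound (Theorem `thm:sol1`). -/
theorem stmt_7 (n : ℕ) (hn : 1 ≤ n)
    (f : EuclideanSpace ℝ (Fin n) → ℝ)
    (f' : EuclideanSpace ℝ (Fin n) → EuclideanSpace ℝ (Fin n))
    (hf : ∀ x, HasGradientAt f (f' x) x)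
    (L : ℝ) (hL : 0 < L)
    (hLip : ∀ x y, ‖f' x - f' y‖ ≤ L * ‖x - y‖)
    (xstar : EuclideanSpace ℝ (Fin n)) (hstar : ∀ y, f xstar ≤ f y)
    (F : ℝ → ℝ → EuclideanSpace ℝ (Fin n) → ℝ)
    (hF : ∀ (h η : ℝ) (x : EuclideanSpace ℝ (Fin n)),
      F h η x = f (x - (η * h) • f' x) - f x + h * η ^ 2 * ‖f' x‖ ^ 2) :
    ∀ h : ℝ, 0 < h → ∀ xk : EuclideanSpace ℝ (Fin n),
      ∃ ηk : ℝ, F h ηk xk = 0 ∧ (1 + L * h / 2)⁻¹ ≤ ηk ∧ 0 < (1 + L * h / 2)⁻¹ := by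
  intro h hh xk
  simpa only [hF, dissipationResidual] using
    stmt_7_general hf ⟨f xstar, forall_mem_range.2 hstar⟩ hL.le (hLip · xk) hh
end

section
/- Suppose ∇f(x_k) ≠ 0 and 0 < h ≤ 2/L. If η_k > 0 satisfies F_h(η_k; x_k) = 0, then η_LB ≤ η_k ≤ (1 − Lh/2)⁻¹ (where for h = 2/L the upper bound is interpreted as η_k(1 − Lh/2) ≤ 1). -/
open RealInnerProductSpace

/-!
The descent lemma bounds the gap between `f (x - t • ∇f x) - f x` and its linear prediction
`-t * ‖∇f x‖ ^ 2` by `L / 2 * t ^ 2 * ‖∇f x‖ ^ 2`. At a zero `η` of `F_h(·; x)` and for `t = η * h`,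
this gap is exactly `t * ‖∇f x‖ ^ 2 * (1 - η)`, so `|1 - η| ≤ L * h / 2 * η`; the two sides of this
inequality are the two bounds on `η`.
-/

section NormedSpace

variable {E G : Type*} [NormedAddCommGroup E] [NormedSpace ℝ E]
  [NormedAddCommGroup G] [NormedSpace ℝ G]

theorem norm_image_sub_sub_deriv_le_of_segment {g g' : ℝ → G} {a b C : ℝ} (hab : a ≤ b)
    (hg : ∀ t ∈ Set.Icc a b, HasDerivWithinAt g (g' t) (Set.Icc a b) t)
    (bound : ∀ t ∈ Set.Ico a b, ‖g' t - g' a‖ ≤ C * (t - a)) :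
    ‖g b - g a - (b - a) • g' a‖ ≤ C / 2 * (b - a) ^ 2 := by
  have hasDerivWithinAt_remainder : ∀ t ∈ Set.Icc a b,
      HasDerivWithinAt (fun t ↦ g t - g a - (t - a) • g' a) (g' t - g' a) (Set.Icc a b) t := by
    intro t ht
    have hlinear : HasDerivAt (fun t ↦ (t - a) • g' a) (g' a) t := by
      simpa only [one_smul] using ((hasDerivAt_id' t).sub_const a).smul_const (g' a)
    exact ((hg t ht).sub_const (g a)).sub hlinear.hasDerivWithinAt
  have hasDerivAt_boundary (t : ℝ) :
      HasDerivAt (fun t ↦ C / 2 * (t - a) ^ 2) (C * (t - a)) t :=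
    ((((hasDerivAt_id' t).sub_const a).pow 2).const_mul (C / 2)).congr_deriv (by push_cast; ring)
  exact image_norm_le_of_norm_deriv_right_le_deriv_boundary
    (fun t ht ↦ (hasDerivWithinAt_remainder t ht).continuousWithinAt)
    (fun t ht ↦ (hasDerivWithinAt_remainder t (Set.Ico_subset_Icc_self ht)).mono_of_mem_nhdsWithin
      (Icc_mem_nhdsGE_of_mem ht))
    (by simp) hasDerivAt_boundary bound (Set.right_mem_Icc.2 hab)

theorem norm_image_sub_sub_fderivWithin_le_of_starConvex {f : E → G} {f' : E → E →L[ℝ] G}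
    {s : Set E} {x y : E} {C : ℝ} (hs : StarConvex ℝ x s)
    (hf : ∀ z ∈ s, HasFDerivWithinAt f (f' z) s z)
    (bound : ∀ z ∈ s, ‖f' z - f' x‖ ≤ C * ‖z - x‖) (hy : y ∈ s) :
    ‖f y - f x - f' x (y - x)‖ ≤ C / 2 * ‖y - x‖ ^ 2 := by
  let γ : ℝ → E := fun t ↦ x + t • (y - x)
  have γ_mem : Set.MapsTo γ (Set.Icc 0 1) s := fun t ht ↦ hs.add_smul_sub_mem hy ht.1 ht.2
  have hasDerivAt_γ (t : ℝ) : HasDerivAt γ (y - x) t := by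
    simpa only [one_smul] using ((hasDerivAt_id' t).smul_const (y - x)).const_add x
  have norm_deriv_sub_le : ∀ t ∈ Set.Ico (0 : ℝ) 1,
      ‖f' (γ t) (y - x) - f' (γ 0) (y - x)‖ ≤ C * ‖y - x‖ ^ 2 * (t - 0) := by
    intro t ht
    calc ‖f' (γ t) (y - x) - f' (γ 0) (y - x)‖ = ‖(f' (γ t) - f' x) (y - x)‖ := by simp [γ]
      _ ≤ ‖f' (γ t) - f' x‖ * ‖y - x‖ := ContinuousLinearMap.le_opNorm _ _
      _ ≤ C * ‖γ t - x‖ * ‖y - x‖ := by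
          gcongr
          exact bound _ (γ_mem (Set.Ico_subset_Icc_self ht))
      _ = C * ‖y - x‖ ^ 2 * (t - 0) := by
          rw [add_sub_cancel_left, norm_smul, Real.norm_of_nonneg ht.1]
          ring
  have segment_bound := norm_image_sub_sub_deriv_le_of_segment zero_le_one
    (fun t ht ↦ (hf (γ t) (γ_mem ht)).comp_hasDerivWithinAt t (hasDerivAt_γ t).hasDerivWithinAt
      γ_mem) norm_deriv_sub_le
  calc ‖f y - f x - f' x (y - x)‖ ≤ C * ‖y - x‖ ^ 2 / 2 := by simpa [γ] using segment_bound
    _ = C / 2 * ‖y - x‖ ^ 2 := by ring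

end NormedSpace

section InnerProductSpace

variable {E : Type*} [NormedAddCommGroup E] [InnerProductSpace ℝ E] [CompleteSpace E]
  {f : E → ℝ} {f' : E → E} {x : E} {L : ℝ}

theorem abs_image_sub_sub_inner_gradient_le (hf : ∀ z, HasGradientAt f (f' z) z)
    (bound : ∀ z, ‖f' z - f' x‖ ≤ L * ‖z - x‖) (y : E) :
    |f y - f x - ⟪f' x, y - x⟫| ≤ L / 2 * ‖y - x‖ ^ 2 := by
  have norm_toDual_sub_le (z : E) :
      ‖InnerProductSpace.toDual ℝ E (f' z) - InnerProductSpace.toDual ℝ E (f' x)‖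
        ≤ L * ‖z - x‖ := by
    rw [← map_sub, LinearIsometryEquiv.norm_map]
    exact bound z
  simpa using norm_image_sub_sub_fderivWithin_le_of_starConvex (starConvex_univ x)
    (fun z _ ↦ (hf z).hasFDerivAt.hasFDerivWithinAt) (fun z _ ↦ norm_toDual_sub_le z)
    (Set.mem_univ y)

theorem abs_image_gradient_step_sub_add_le (hf : ∀ z, HasGradientAt f (f' z) z)
    (bound : ∀ z, ‖f' z - f' x‖ ≤ L * ‖z - x‖) (t : ℝ) :
    |f (x - t • f' x) - f x + t * ‖f' x‖ ^ 2| ≤ L / 2 * t ^ 2 * ‖f' x‖ ^ 2 := by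
  have descent := abs_image_sub_sub_inner_gradient_le hf bound (x - t • f' x)
  rwa [sub_sub_cancel_left, inner_neg_right, real_inner_smul_right, real_inner_self_eq_norm_sq,
    sub_neg_eq_add, norm_neg, norm_smul, mul_pow, Real.norm_eq_abs, sq_abs, ← mul_assoc] at descent

theorem abs_one_sub_le_of_gradient_step_eq_zero (hf : ∀ z, HasGradientAt f (f' z) z)
    (bound : ∀ z, ‖f' z - f' x‖ ≤ L * ‖z - x‖) (hgrad : f' x ≠ 0) {h η : ℝ} (hh : 0 < h)
    (hη : 0 < η) (hsol : f (x - (η * h) • f' x) - f x + h * η ^ 2 * ‖f' x‖ ^ 2 = 0) :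
    |1 - η| ≤ L * h / 2 * η := by
  have decrease_pos : 0 < η * h * ‖f' x‖ ^ 2 := by positivity
  have gap_eq : f (x - (η * h) • f' x) - f x + η * h * ‖f' x‖ ^ 2
      = η * h * ‖f' x‖ ^ 2 * (1 - η) := by
    linear_combination hsol
  refine le_of_mul_le_mul_left ?_ decrease_pos
  calc η * h * ‖f' x‖ ^ 2 * |1 - η|
      = |f (x - (η * h) • f' x) - f x + η * h * ‖f' x‖ ^ 2| := by
        rw [gap_eq, abs_mul, abs_of_pos decrease_pos]
    _ ≤ L / 2 * (η * h) ^ 2 * ‖f' x‖ ^ 2 := abs_image_gradient_step_sub_add_le hf bound (η * h)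
    _ = η * h * ‖f' x‖ ^ 2 * (L * h / 2 * η) := by ring

theorem stmt_8_general (hf : ∀ z, HasGradientAt f (f' z) z)
    (bound : ∀ z, ‖f' z - f' x‖ ≤ L * ‖z - x‖) {h η : ℝ} (hh : 0 < h) (hgrad : f' x ≠ 0)
    (hη : 0 < η) (hsol : f (x - (η * h) • f' x) - f x + h * η ^ 2 * ‖f' x‖ ^ 2 = 0) :
    (1 + L * h / 2)⁻¹ ≤ η ∧ η * (1 - L * h / 2) ≤ 1 := by
  obtain ⟨lower, upper⟩ :=
    abs_le.1 (abs_one_sub_le_of_gradient_step_eq_zero hf bound hgrad hh hη hsol)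
  have one_le_mul : 1 ≤ (1 + L * h / 2) * η := by linarith
  have factor_pos : 0 < 1 + L * h / 2 := pos_of_mul_pos_left (by linarith) hη.le
  exact ⟨(inv_le_iff_one_le_mul₀' factor_pos).2 one_le_mul, by linarith⟩

end InnerProductSpace

/-- Bounds on positive solutions for small step sizes (Theorem `thm:ub`). -/
theorem stmt_8 (n : ℕ) (hn : 1 ≤ n)
    (f : EuclideanSpace ℝ (Fin n) → ℝ)
    (f' : EuclideanSpace ℝ (Fin n) → EuclideanSpace ℝ (Fin n))
    (hf : ∀ x, HasGradientAt f (f' x) x)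
    (L : ℝ) (hL : 0 < L)
    (hLip : ∀ x y, ‖f' x - f' y‖ ≤ L * ‖x - y‖)
    (xstar : EuclideanSpace ℝ (Fin n)) (hstar : ∀ y, f xstar ≤ f y)
    (F : ℝ → ℝ → EuclideanSpace ℝ (Fin n) → ℝ)
    (hF : ∀ (h η : ℝ) (x : EuclideanSpace ℝ (Fin n)),
      F h η x = f (x - (η * h) • f' x) - f x + h * η ^ 2 * ‖f' x‖ ^ 2)
    (h : ℝ) (hh : 0 < h) (hh2 : h ≤ 2 / L)
    (xk : EuclideanSpace ℝ (Fin n)) (hgrad : f' xk ≠ 0)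
    (ηk : ℝ) (hηk : 0 < ηk) (hsol : F h ηk xk = 0) :
    (1 + L * h / 2)⁻¹ ≤ ηk ∧ ηk * (1 - L * h / 2) ≤ 1 :=
  stmt_8_general hf (fun y ↦ hLip y xk) hh hgrad hηk (hF h ηk xk ▸ hsol)
end

section
/- Suppose f satisfies the Polyak–Łojasiewicz inequality with parameter μ > 0 and ∇f(x_k) ≠ 0. Then for every h > 0 there exists a solution η_k of F_h(η_k; x_k) = 0 with η_LB ≤ η_k ≤ (2μh)^{−1/2}. -/
open RealInnerProductSpace

/-!
The function `η ↦ F_h(η; x)` is continuous. The descent lemma bounds it above by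
`h η ‖∇f(x)‖² (η (1 + Lh/2) - 1)`, which vanishes at `η_LB = (1 + Lh/2)⁻¹`, while the PŁ inequality
makes it nonnegative at `(2μh)^{-1/2}`. Since `∇f(x) ≠ 0`, comparing the two bounds at
`(2μh)^{-1/2}` shows that `η_LB ≤ (2μh)^{-1/2}`, so the intermediate value theorem yields a zero
between the two points.
-/

open scoped Gradient

section DescentLemma

variable {E : Type*} [NormedAddCommGroup E] [NormedSpace ℝ E] {f : E → ℝ} {x : E} {L : ℝ}

theorem fderiv_add_smul_apply_le_of_fderiv_sub_le
    (hL : ∀ y, (fderiv ℝ f y - fderiv ℝ f x) (y - x) ≤ L * ‖y - x‖ ^ 2)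
    (v : E) {t : ℝ} (ht : 0 ≤ t) :
    fderiv ℝ f (x + t • v) v ≤ fderiv ℝ f x v + L * t * ‖v‖ ^ 2 := by
  rcases ht.eq_or_lt with rfl | ht
  · simp
  have hscaled : t * (fderiv ℝ f (x + t • v) v - fderiv ℝ f x v) ≤ t * (L * t * ‖v‖ ^ 2) := by
    have := hL (x + t • v)
    rw [add_sub_cancel_left, map_smul, norm_smul, Real.norm_of_nonneg ht.le, smul_eq_mul,
      sub_apply] at this
    linarith
  linarith [le_of_mul_le_mul_left hscaled ht]

theorem apply_add_le_of_fderiv_sub_le (hf : Differentiable ℝ f)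
    (hL : ∀ y, (fderiv ℝ f y - fderiv ℝ f x) (y - x) ≤ L * ‖y - x‖ ^ 2) (v : E) :
    f (x + v) ≤ f x + fderiv ℝ f x v + L / 2 * ‖v‖ ^ 2 := by
  have hray (t : ℝ) : HasDerivAt (fun t : ℝ ↦ f (x + t • v)) (fderiv ℝ f (x + t • v) v) t := by
    have hline : HasDerivAt (fun t : ℝ ↦ x + t • v) v t := by
      simpa only [id, one_smul] using ((hasDerivAt_id t).smul_const v).const_add x
    exact (hf _).hasFDerivAt.comp_hasDerivAt t hline
  have hparabola (t : ℝ) :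
      HasDerivAt (fun t : ℝ ↦ f x + t * fderiv ℝ f x v + L / 2 * ‖v‖ ^ 2 * t ^ 2)
        (fderiv ℝ f x v + L * t * ‖v‖ ^ 2) t :=
    ((((hasDerivAt_id t).mul_const _).const_add _).add
      ((hasDerivAt_pow 2 t).const_mul _)).congr_deriv (by norm_num; ring)
  have hle : f (x + (1 : ℝ) • v) ≤ f x + 1 * fderiv ℝ f x v + L / 2 * ‖v‖ ^ 2 * 1 ^ 2 :=
    image_le_of_deriv_right_le_deriv_boundary
      (fun t _ ↦ (hray t).continuousAt.continuousWithinAt) (fun t _ ↦ (hray t).hasDerivWithinAt)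
      (by simp) (fun t _ ↦ (hparabola t).continuousAt.continuousWithinAt)
      (fun t _ ↦ (hparabola t).hasDerivWithinAt)
      (fun t ht ↦ fderiv_add_smul_apply_le_of_fderiv_sub_le hL v ht.1)
      (Set.right_mem_Icc.2 zero_le_one)
  simpa only [one_smul, one_mul, one_pow, mul_one] using hle

end DescentLemma

section DissipationDefect

variable {E : Type*} [NormedAddCommGroup E] [InnerProductSpace ℝ E] [CompleteSpace E]
  {f : E → ℝ} {x : E} {L μ h η : ℝ}

/-- The quantity `F_h(η; x)`: the amount by which the gradient step `x ↦ x - ηh∇f(x)` fails to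
dissipate exactly the energy `hη²‖∇f(x)‖²`. -/
noncomputable def dissipationDefect (f : E → ℝ) (h : ℝ) (x : E) (η : ℝ) : ℝ :=
  f (x - (η * h) • ∇ f x) - f x + h * η ^ 2 * ‖∇ f x‖ ^ 2

theorem continuous_dissipationDefect (hf : Continuous f) :
    Continuous (dissipationDefect f h x) := by
  unfold dissipationDefect
  fun_prop

theorem dissipationDefect_le (hf : Differentiable ℝ f)
    (hL : ∀ y, ⟪∇ f y - ∇ f x, y - x⟫ ≤ L * ‖y - x‖ ^ 2) (h η : ℝ) :
    dissipationDefect f h x η ≤ h * η * ‖∇ f x‖ ^ 2 * ((1 + L * h / 2) * η - 1) := by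
  have hdescent := apply_add_le_of_fderiv_sub_le hf
    (by simpa only [sub_apply, inner_sub_left, inner_gradient_left] using hL) (-((η * h) • ∇ f x))
  rw [← sub_eq_add_neg, ← inner_gradient_left, inner_neg_right, real_inner_smul_right,
    real_inner_self_eq_norm_sq, norm_neg, norm_smul, mul_pow, Real.norm_eq_abs, sq_abs] at hdescent
  unfold dissipationDefect
  linarith

theorem dissipationDefect_inv_nonpos (hf : Differentiable ℝ f)
    (hL : ∀ y, ⟪∇ f y - ∇ f x, y - x⟫ ≤ L * ‖y - x‖ ^ 2) (hc : 1 + L * h / 2 ≠ 0) :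
    dissipationDefect f h x (1 + L * h / 2)⁻¹ ≤ 0 := by
  simpa only [mul_inv_cancel₀ hc, sub_self, mul_zero] using
    dissipationDefect_le hf hL h (1 + L * h / 2)⁻¹

theorem dissipationDefect_inv_sqrt_nonneg (hμ : 0 < μ) (hh : 0 < h)
    (hPL : ∀ y, μ * (f x - f y) ≤ 1 / 2 * ‖∇ f x‖ ^ 2) :
    0 ≤ dissipationDefect f h x (√(2 * μ * h))⁻¹ := by
  have hdrop := hPL (x - ((√(2 * μ * h))⁻¹ * h) • ∇ f x)
  have hdissipated : μ * (h * (√(2 * μ * h))⁻¹ ^ 2 * ‖∇ f x‖ ^ 2) = 1 / 2 * ‖∇ f x‖ ^ 2 := by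
    rw [inv_pow, Real.sq_sqrt (by positivity)]
    field_simp
  refine nonneg_of_mul_nonneg_right (a := μ) ?_ hμ
  unfold dissipationDefect
  linarith

theorem one_le_mul_of_dissipationDefect_nonneg (hf : Differentiable ℝ f)
    (hL : ∀ y, ⟪∇ f y - ∇ f x, y - x⟫ ≤ L * ‖y - x‖ ^ 2) (hx : ∇ f x ≠ 0) (hh : 0 < h)
    (hη : 0 < η) (hdefect : 0 ≤ dissipationDefect f h x η) :
    1 ≤ (1 + L * h / 2) * η := by
  have hpos : 0 < h * η * ‖∇ f x‖ ^ 2 := by positivity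
  exact sub_nonneg.1 <|
    nonneg_of_mul_nonneg_right (hdefect.trans (dissipationDefect_le hf hL h η)) hpos

/-- Here `hL` is a one-sided Lipschitz condition on the gradient at `x`, and `hPL` is the PŁ
inequality at `x` with `f y`, for arbitrary `y`, in place of `f⋆`. -/
theorem stmt_10_general (hf : Differentiable ℝ f)
    (hL : ∀ y, ⟪∇ f y - ∇ f x, y - x⟫ ≤ L * ‖y - x‖ ^ 2)
    (hμ : 0 < μ) (hPL : ∀ y, μ * (f x - f y) ≤ 1 / 2 * ‖∇ f x‖ ^ 2)
    (hh : 0 < h) (hx : ∇ f x ≠ 0) :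
    ∃ η, dissipationDefect f h x η = 0 ∧ (1 + L * h / 2)⁻¹ ≤ η ∧ η ≤ (√(2 * μ * h))⁻¹ := by
  have hsqrt : 0 < √(2 * μ * h) := Real.sqrt_pos.2 (by positivity)
  have hupper := dissipationDefect_inv_sqrt_nonneg hμ hh hPL
  have hone := one_le_mul_of_dissipationDefect_nonneg hf hL hx hh (inv_pos.2 hsqrt) hupper
  have hsqrt_le : √(2 * μ * h) ≤ 1 + L * h / 2 := by
    rwa [← div_eq_mul_inv, one_le_div hsqrt] at hone
  have hlower := dissipationDefect_inv_nonpos hf hL (hsqrt.trans_le hsqrt_le).ne'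
  obtain ⟨η, ⟨hη_ge, hη_le⟩, hη_zero⟩ := intermediate_value_Icc (inv_anti₀ hsqrt hsqrt_le)
    (continuous_dissipationDefect hf.continuous).continuousOn ⟨hlower, hupper⟩
  exact ⟨η, hη_zero, hη_ge, hη_le⟩

end DissipationDefect

/-- Existence of a nontrivial solution with bounds under the PŁ inequality (Theorem `thm:ubPL`). -/
theorem stmt_10 (n : ℕ) (hn : 1 ≤ n)
    (f : EuclideanSpace ℝ (Fin n) → ℝ)
    (f' : EuclideanSpace ℝ (Fin n) → EuclideanSpace ℝ (Fin n))
    (hf : ∀ x, HasGradientAt f (f' x) x)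
    (L : ℝ) (hL : 0 < L)
    (hLip : ∀ x y, ‖f' x - f' y‖ ≤ L * ‖x - y‖)
    (xstar : EuclideanSpace ℝ (Fin n)) (hstar : ∀ y, f xstar ≤ f y)
    (F : ℝ → ℝ → EuclideanSpace ℝ (Fin n) → ℝ)
    (hF : ∀ (h η : ℝ) (x : EuclideanSpace ℝ (Fin n)),
      F h η x = f (x - (η * h) • f' x) - f x + h * η ^ 2 * ‖f' x‖ ^ 2)
    (μ : ℝ) (hμ : 0 < μ)
    (hPL : ∀ y, μ * (f y - f xstar) ≤ (1/2) * ‖f' y‖ ^ 2)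
    (h : ℝ) (hh : 0 < h)
    (xk : EuclideanSpace ℝ (Fin n)) (hgrad : f' xk ≠ 0) :
    ∃ ηk : ℝ, F h ηk xk = 0 ∧ (1 + L * h / 2)⁻¹ ≤ ηk ∧
      ηk ≤ (Real.sqrt (2 * μ * h))⁻¹ := by
  obtain rfl : ∇ f = f' := gradient_eq hf
  have hOneSided (y) : ⟪∇ f y - ∇ f xk, y - xk⟫ ≤ L * ‖y - xk‖ ^ 2 := calc
    _ ≤ ‖∇ f y - ∇ f xk‖ * ‖y - xk‖ := real_inner_le_norm _ _
    _ ≤ L * ‖y - xk‖ * ‖y - xk‖ := by gcongr; exact hLip y xk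
    _ = L * ‖y - xk‖ ^ 2 := by ring
  have hPL_xk (y) : μ * (f xk - f y) ≤ 1 / 2 * ‖∇ f xk‖ ^ 2 := calc
    _ ≤ μ * (f xk - f xstar) := by gcongr; exact hstar y
    _ ≤ 1 / 2 * ‖∇ f xk‖ ^ 2 := hPL xk
  simpa only [hF, dissipationDefect] using
    stmt_10_general (fun x ↦ (hf x).differentiableAt) hOneSided hμ hPL_xk hh hgrad
end

section
/- Let (x_k), (η_k) satisfy the scheme with η_k > 0 for every k. Then Σ_{k=0}^∞ ‖∇f(x_k)‖² ≤ (Lh/2 + 1)² (f(x₀) − f⋆)/h, and for every k ≥ 0, min over 0 ≤ i ≤ k of ‖∇f(x_i)‖ ≤ (Lh/2 + 1) sqrt((f(x₀) − f⋆)/((k+1)h)). -/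
open RealInnerProductSpace

/-!
Combining the two equations of the scheme gives `f x - f x⁺ = h * η ^ 2 * ‖∇f x‖ ^ 2` for a step
from `x` to `x⁺` with multiplier `η`. The first-order Taylor estimate for an `L`-smooth function
along the same step gives `|1 - η| ≤ L * h / 2 * |η|` unless `η = 0` or `∇f x = 0`, and hence
`1 ≤ (L * h / 2 + 1) * |η|`. The multiplier is thus bounded away from zero, so
`h * ‖∇f x‖ ^ 2 ≤ (L * h / 2 + 1) ^ 2 * (f x - f x⁺)`, and the right-hand side telescopes.
-/

open scoped NNReal Finset

open Finset (range)

section Taylor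

variable {E F : Type*} [NormedAddCommGroup E] [NormedSpace ℝ E]
  [NormedAddCommGroup F] [NormedSpace ℝ F] {K : ℝ≥0}

lemma norm_image_add_sub_sub_le_of_lipschitzWith_fderiv {f : E → F} {f' : E → E →L[ℝ] F}
    (hf : ∀ x, HasFDerivAt f (f' x) x) (hf' : LipschitzWith K f') (x v : E) :
    ‖f (x + v) - f x - f' x v‖ ≤ K / 2 * ‖v‖ ^ 2 := by
  let remainder (t : ℝ) : F := f (x + t • v) - f x - t • f' x v
  have hasDerivAt_remainder (t : ℝ) :
      HasDerivAt remainder (f' (x + t • v) v - f' x v) t := by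
    have hline : HasDerivAt (fun t : ℝ ↦ x + t • v) v t := by
      simpa only [one_smul, id] using ((hasDerivAt_id t).smul_const v).const_add x
    refine HasDerivAt.sub (((hf _).comp_hasDerivAt t hline).sub_const (f x)) ?_
    simpa only [one_smul, id] using (hasDerivAt_id t).smul_const (f' x v)
  have hasDerivAt_bound (t : ℝ) :
      HasDerivAt (fun t : ℝ ↦ K / 2 * ‖v‖ ^ 2 * t ^ 2) (K * t * ‖v‖ * ‖v‖) t := by
    refine ((hasDerivAt_pow 2 t).const_mul (K / 2 * ‖v‖ ^ 2)).congr_deriv ?_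
    ring
  have norm_deriv_le (t : ℝ) (ht : t ∈ Set.Ico (0 : ℝ) 1) :
      ‖f' (x + t • v) v - f' x v‖ ≤ K * t * ‖v‖ * ‖v‖ :=
    calc ‖f' (x + t • v) v - f' x v‖ ≤ ‖f' (x + t • v) - f' x‖ * ‖v‖ :=
          (f' (x + t • v) - f' x).le_opNorm v
      _ ≤ K * ‖x + t • v - x‖ * ‖v‖ := by gcongr; exact hf'.norm_sub_le _ _
      _ = K * t * ‖v‖ * ‖v‖ := by
          rw [add_sub_cancel_left, norm_smul, Real.norm_of_nonneg ht.1, ← mul_assoc (K : ℝ)]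
  have norm_remainder_le : ‖remainder 1‖ ≤ K / 2 * ‖v‖ ^ 2 * 1 ^ 2 :=
    image_norm_le_of_norm_deriv_right_le_deriv_boundary
      (fun t _ ↦ (hasDerivAt_remainder t).continuousAt.continuousWithinAt)
      (fun t _ ↦ (hasDerivAt_remainder t).hasDerivWithinAt)
      (by simp [remainder]) hasDerivAt_bound norm_deriv_le (Set.right_mem_Icc.2 zero_le_one)
  simpa only [remainder, one_smul, one_pow, mul_one] using norm_remainder_le

lemma abs_image_add_sub_sub_inner_le_of_lipschitzWith_gradient {H : Type*}
    [NormedAddCommGroup H] [InnerProductSpace ℝ H] [CompleteSpace H] {f : H → ℝ} {f' : H → H}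
    (hf : ∀ x, HasGradientAt f (f' x) x) (hf' : LipschitzWith K f') (x v : H) :
    |f (x + v) - f x - ⟪f' x, v⟫| ≤ K / 2 * ‖v‖ ^ 2 := by
  have hdual : LipschitzWith K (InnerProductSpace.toDual ℝ H ∘ f') := by
    simpa only [one_mul] using (InnerProductSpace.toDual ℝ H).lipschitz.comp hf'
  exact norm_image_add_sub_sub_le_of_lipschitzWith_fderiv (fun y ↦ (hf y).hasFDerivAt) hdual x v

end Taylor

section Sums

lemma sum_range_le_mul_sub_of_le_mul_sub_succ {R : Type*} [Ring R] [PartialOrder R]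
    [IsOrderedRing R] {a u : ℕ → R} {C m : R} (hC : 0 ≤ C)
    (ha : ∀ k, a k ≤ C * (u k - u (k + 1))) (hu : ∀ k, m ≤ u k) (n : ℕ) :
    ∑ i ∈ range n, a i ≤ C * (u 0 - m) :=
  calc ∑ i ∈ range n, a i ≤ ∑ i ∈ range n, C * (u i - u (i + 1)) :=
        Finset.sum_le_sum fun i _ ↦ ha i
    _ = C * (u 0 - u n) := by rw [← Finset.mul_sum, Finset.sum_range_sub']
    _ ≤ C * (u 0 - m) := by gcongr; exact hu n

lemma exists_mem_le_div_card_of_sum_le {ι R : Type*} [Field R] [LinearOrder R]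
    [IsStrictOrderedRing R] {s : Finset ι} {a : ι → R} {S : R} (hs : s.Nonempty)
    (hS : ∑ i ∈ s, a i ≤ S) : ∃ i ∈ s, a i ≤ S / #s := by
  have hcard : (#s : R) ≠ 0 := Nat.cast_ne_zero.2 hs.card_ne_zero
  refine Finset.exists_le_of_sum_le hs (hS.trans_eq ?_)
  rw [Finset.sum_const, nsmul_eq_mul, mul_div_cancel₀ _ hcard]

end Sums

section Scheme

variable {E : Type*} [NormedAddCommGroup E] [InnerProductSpace ℝ E]

/-- The iterates `x k` and multipliers `η k` of the Lagrange multiplier scheme for `f` with step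
size `h`. The map `f'` stands for the gradient of `f`; that it is one is a separate hypothesis. -/
structure IsLagrangeMultiplierScheme (f : E → ℝ) (f' : E → E) (h : ℝ) (x : ℕ → E) (η : ℕ → ℝ) :
    Prop where
  step (k : ℕ) : x (k + 1) = x k - (h * η k) • f' (x k)
  energy_balance (k : ℕ) : f (x (k + 1)) - f (x k) = η k * ⟪f' (x k), x (k + 1) - x k⟫

namespace IsLagrangeMultiplierScheme

variable {f : E → ℝ} {f' : E → E} {h : ℝ} {x : ℕ → E} {η : ℕ → ℝ} {K : ℝ≥0}

lemma inner_step (hx : IsLagrangeMultiplierScheme f f' h x η) (k : ℕ) :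
    ⟪f' (x k), x (k + 1) - x k⟫ = -(h * η k * ‖f' (x k)‖ ^ 2) := by
  rw [hx.step k, sub_sub_cancel_left, inner_neg_right, real_inner_smul_right,
    real_inner_self_eq_norm_sq]

lemma sub_succ_eq (hx : IsLagrangeMultiplierScheme f f' h x η) (k : ℕ) :
    f (x k) - f (x (k + 1)) = h * η k ^ 2 * ‖f' (x k)‖ ^ 2 := by
  rw [← neg_sub, hx.energy_balance k, hx.inner_step k]
  ring

variable [CompleteSpace E]

lemma one_le_mul_abs_multiplier (hx : IsLagrangeMultiplierScheme f f' h x η)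
    (hf : ∀ y, HasGradientAt f (f' y) y) (hf' : LipschitzWith K f') (hh : 0 < h) {k : ℕ}
    (hη : η k ≠ 0) (hgrad : f' (x k) ≠ 0) : 1 ≤ (K * h / 2 + 1) * |η k| := by
  have htaylor : |f (x (k + 1)) - f (x k) - ⟪f' (x k), x (k + 1) - x k⟫| ≤
      K / 2 * ‖x (k + 1) - x k‖ ^ 2 := by
    simpa only [add_sub_cancel] using
      abs_image_add_sub_sub_inner_le_of_lipschitzWith_gradient hf hf' (x k) (x (k + 1) - x k)
  have hremainder : f (x (k + 1)) - f (x k) - ⟪f' (x k), x (k + 1) - x k⟫ =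
      h * ‖f' (x k)‖ ^ 2 * η k * (1 - η k) := by
    rw [hx.energy_balance k, hx.inner_step k]
    ring
  have hstep : ‖x (k + 1) - x k‖ = h * |η k| * ‖f' (x k)‖ := by
    rw [hx.step k, sub_sub_cancel_left, norm_neg, norm_smul, Real.norm_eq_abs, abs_mul,
      abs_of_pos hh]
  have hscaled : h * ‖f' (x k)‖ ^ 2 * |η k| * |1 - η k| ≤
      h * ‖f' (x k)‖ ^ 2 * |η k| * (K * h / 2 * |η k|) :=
    calc h * ‖f' (x k)‖ ^ 2 * |η k| * |1 - η k| = |h * ‖f' (x k)‖ ^ 2 * η k * (1 - η k)| := by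
          rw [abs_mul, abs_mul, abs_of_nonneg (by positivity : 0 ≤ h * ‖f' (x k)‖ ^ 2)]
      _ ≤ K / 2 * (h * |η k| * ‖f' (x k)‖) ^ 2 := by rwa [← hremainder, ← hstep]
      _ = h * ‖f' (x k)‖ ^ 2 * |η k| * (K * h / 2 * |η k|) := by ring
  have habs : |1 - η k| ≤ K * h / 2 * |η k| := le_of_mul_le_mul_left hscaled (by positivity)
  calc 1 = |(1 - η k) + η k| := by rw [sub_add_cancel, abs_one]
    _ ≤ |1 - η k| + |η k| := abs_add_le _ _
    _ ≤ K * h / 2 * |η k| + |η k| := by gcongr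
    _ = (K * h / 2 + 1) * |η k| := by ring

lemma norm_sq_le_mul_sub_succ (hx : IsLagrangeMultiplierScheme f f' h x η)
    (hf : ∀ y, HasGradientAt f (f' y) y) (hf' : LipschitzWith K f') (hh : 0 < h) {k : ℕ}
    (hη : η k ≠ 0) :
    ‖f' (x k)‖ ^ 2 ≤ (K * h / 2 + 1) ^ 2 / h * (f (x k) - f (x (k + 1))) := by
  rw [hx.sub_succ_eq k]
  rcases eq_or_ne (f' (x k)) 0 with hzero | hgrad
  · simp [hzero]
  calc ‖f' (x k)‖ ^ 2 ≤ ((K * h / 2 + 1) * |η k|) ^ 2 * ‖f' (x k)‖ ^ 2 :=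
        le_mul_of_one_le_left (sq_nonneg _)
          (one_le_pow₀ (hx.one_le_mul_abs_multiplier hf hf' hh hη hgrad))
    _ = (K * h / 2 + 1) ^ 2 / h * (h * η k ^ 2 * ‖f' (x k)‖ ^ 2) := by
        rw [mul_pow, sq_abs]
        field_simp

end IsLagrangeMultiplierScheme

theorem stmt_11_general [CompleteSpace E] {f : E → ℝ} {f' : E → E} {K : ℝ≥0} {h m : ℝ}
    {x : ℕ → E} {η : ℕ → ℝ} (hf : ∀ y, HasGradientAt f (f' y) y) (hf' : LipschitzWith K f')
    (hm : ∀ k, m ≤ f (x k)) (hh : 0 < h) (hη : ∀ k, η k ≠ 0)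
    (hx : IsLagrangeMultiplierScheme f f' h x η) :
    (Summable (fun k ↦ ‖f' (x k)‖ ^ 2) ∧
      ∑' k, ‖f' (x k)‖ ^ 2 ≤ (K * h / 2 + 1) ^ 2 * (f (x 0) - m) / h) ∧
    ∀ k : ℕ, ∃ i ≤ k, ‖f' (x i)‖ ≤
      (K * h / 2 + 1) * √((f (x 0) - m) / ((k + 1) * h)) := by
  have hsum (n : ℕ) : ∑ i ∈ range n, ‖f' (x i)‖ ^ 2 ≤
      (K * h / 2 + 1) ^ 2 * (f (x 0) - m) / h :=
    (sum_range_le_mul_sub_of_le_mul_sub_succ (u := fun k ↦ f (x k)) (by positivity)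
      (fun k ↦ hx.norm_sq_le_mul_sub_succ hf hf' hh (hη k)) hm n).trans_eq (by ring)
  refine ⟨⟨summable_of_sum_range_le (fun _ ↦ sq_nonneg _) hsum,
    Real.tsum_le_of_sum_range_le (fun _ ↦ sq_nonneg _) hsum⟩, fun k ↦ ?_⟩
  obtain ⟨i, hik, hi⟩ :=
    exists_mem_le_div_card_of_sum_le Finset.nonempty_range_add_one (hsum (k + 1))
  rw [Finset.card_range, Nat.cast_add_one] at hi
  refine ⟨i, Finset.mem_range_succ_iff.1 hik, ?_⟩
  calc ‖f' (x i)‖ ≤ √((K * h / 2 + 1) ^ 2 * (f (x 0) - m) / h / (k + 1)) :=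
        Real.le_sqrt_of_sq_le hi
    _ = √((K * h / 2 + 1) ^ 2 * ((f (x 0) - m) / ((k + 1) * h))) := by
        rw [div_div, mul_div_assoc, mul_comm h]
    _ = (K * h / 2 + 1) * √((f (x 0) - m) / ((k + 1) * h)) := by
        rw [Real.sqrt_mul (sq_nonneg _), Real.sqrt_sq (by positivity)]

end Scheme

/-- Gradient-norm rates for the Lagrange multiplier scheme (Theorem `thm:LMrate1`). -/
theorem stmt_11 (n : ℕ) (hn : 1 ≤ n)
    (f : EuclideanSpace ℝ (Fin n) → ℝ)
    (f' : EuclideanSpace ℝ (Fin n) → EuclideanSpace ℝ (Fin n))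
    (hf : ∀ x, HasGradientAt f (f' x) x)
    (L : ℝ) (hL : 0 < L)
    (hLip : ∀ x y, ‖f' x - f' y‖ ≤ L * ‖x - y‖)
    (xstar : EuclideanSpace ℝ (Fin n)) (hstar : ∀ y, f xstar ≤ f y)
    (h : ℝ) (hh : 0 < h)
    (x : ℕ → EuclideanSpace ℝ (Fin n)) (η : ℕ → ℝ) (hηpos : ∀ k, 0 < η k)
    (hscheme1 : ∀ k : ℕ, x (k + 1) = x k - (h * η k) • f' (x k))
    (hscheme2 : ∀ k : ℕ,
      f (x (k + 1)) - f (x k) = η k * ⟪f' (x k), x (k + 1) - x k⟫) :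
    (Summable (fun k : ℕ => ‖f' (x k)‖ ^ 2) ∧
      ∑' k : ℕ, ‖f' (x k)‖ ^ 2 ≤ (L * h / 2 + 1) ^ 2 * (f (x 0) - f xstar) / h) ∧
    ∀ k : ℕ, ∃ i ≤ k, ‖f' (x i)‖ ≤
      (L * h / 2 + 1) * Real.sqrt ((f (x 0) - f xstar) / ((k + 1) * h)) :=
  stmt_11_general (K := ⟨L, hL.le⟩) hf
    (.of_dist_le_mul fun y z ↦ by rw [dist_eq_norm, dist_eq_norm]; exact hLip y z)
    (fun k ↦ hstar (x k)) hh (fun k ↦ (hηpos k).ne') ⟨hscheme1, hscheme2⟩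
end

section
/- Assume in addition that f is coercive (f(x) → ∞ as ‖x‖ → ∞). Let (x_k), (η_k) satisfy the scheme with η_k > 0 for every k. Then the sequence (x_k) has an accumulation point, and every accumulation point x^* of (x_k) satisfies ∇f(x^*) = 0. -/
open RealInnerProductSpace

open Filter Topology

/-!
Each step decreases `f` by `‖x (k + 1) - x k‖ ^ 2 / h`. If `p` is an accumulation point, the
decreasing sequence `f (x k)` converges to `f p`, so the steps tend to zero, and along a subsequence
both `x k` and `x (k + 1)` tend to `p`. The limit of `(η k)⁻¹ (f (x (k + 1)) - f (x k))` along it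
can be found in two ways: it is `⟪f' p, -h f' p⟫` by strict differentiability at `p`, because
`(η k)⁻¹ (x (k + 1) - x k) = -h f' (x k)`, and it is zero because the scheme makes the quotient
equal to `⟪f' (x k), x (k + 1) - x k⟫`. Hence `h ‖f' p‖ ^ 2 = 0`.
-/

theorem exists_mapClusterPt_of_tendsto_cocompact_atTop {X ι β : Type*} [TopologicalSpace X]
    [Preorder β] [NoMaxOrder β] {f : X → β} (hf : Tendsto f (cocompact X) atTop)
    {l : Filter ι} {u : ι → X} {c : β} (hu : ∃ᶠ i in l, f (u i) ≤ c) :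
    ∃ p, MapClusterPt p l u := by
  obtain ⟨K, hK, hKc⟩ := mem_cocompact.1 (hf.eventually (eventually_gt_atTop c))
  have huK : ∃ᶠ i in l, u i ∈ K :=
    hu.mono fun i hi => by_contra fun hiK => hi.not_gt (hKc hiK)
  obtain ⟨p, -, hp⟩ := hK.exists_mapClusterPt_of_frequently huK
  exact ⟨p, hp⟩

theorem tendsto_atTop_of_antitone_of_mapClusterPt {ι α : Type*} [Preorder ι]
    [IsDirectedOrder ι] [Nonempty ι] [TopologicalSpace α] [Preorder α] [OrderTopology α]
    {u : ι → α} {a : α} (hu : Antitone u) (ha : MapClusterPt a atTop u) :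
    Tendsto u atTop (𝓝 a) := by
  refine tendsto_order.2 ⟨fun b hb => .of_forall fun i => ?_, fun b hb => ?_⟩
  · obtain ⟨j, hij, hj⟩ := frequently_atTop.1 (ha.frequently (lt_mem_nhds hb)) i
    exact hj.trans_le (hu hij)
  · obtain ⟨i, hi⟩ := (ha.frequently (gt_mem_nhds hb)).exists
    filter_upwards [eventually_ge_atTop i] with j hij using (hu hij).trans_lt hi

theorem tendsto_smul_sub_of_hasStrictFDerivAt {𝕜 E F ι : Type*} [NontriviallyNormedField 𝕜]
    [NormedAddCommGroup E] [NormedSpace 𝕜 E] [NormedAddCommGroup F] [NormedSpace 𝕜 F]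
    {f : E → F} {f' : E →L[𝕜] F} {p v : E} {l : Filter ι} {a b : ι → E} {c : ι → 𝕜}
    (hf : HasStrictFDerivAt f f' p) (ha : Tendsto a l (𝓝 p)) (hb : Tendsto b l (𝓝 p))
    (hv : Tendsto (fun i => c i • (a i - b i)) l (𝓝 v)) :
    Tendsto (fun i => c i • (f (a i) - f (b i))) l (𝓝 (f' v)) := by
  have hlittle : (fun i => c i • (f (a i) - f (b i) - f' (a i - b i))) =o[l] fun _ => (1 : ℝ) :=
    ((Asymptotics.isBigO_refl c l).smul_isLittleO
      (hf.isLittleO.comp_tendsto (ha.prodMk_nhds hb))).trans_isBigO (hv.isBigO_one ℝ)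
  have hzero := (Asymptotics.isLittleO_one_iff ℝ).1 hlittle
  simpa [smul_sub] using hzero.add ((f'.continuous.tendsto v).comp hv)

theorem hasStrictFDerivAt_of_hasGradientAt_of_continuousAt {𝕜 E : Type*} [RCLike 𝕜]
    [NormedAddCommGroup E] [InnerProductSpace 𝕜 E] [CompleteSpace E] {f : E → 𝕜} {f' : E → E}
    {p : E} (hf : ∀ᶠ y in 𝓝 p, HasGradientAt f (f' y) y) (hf' : ContinuousAt f' p) :
    HasStrictFDerivAt f (InnerProductSpace.toDual 𝕜 E (f' p)) p :=
  hasStrictFDerivAt_of_hasFDerivAt_of_continuousAt (hf.mono fun _ hy => hy.hasFDerivAt)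
    ((InnerProductSpace.toDual 𝕜 E).continuous.continuousAt.comp hf')

section Scheme

variable {E : Type*} [NormedAddCommGroup E] [InnerProductSpace ℝ E]

/-- Gradient descent `x` for `f` whose relaxation factors `η` satisfy an exact energy balance
in each step. That `f'` is the gradient of `f` is not part of the definition. -/
structure IsEnergyBalancedDescent (f : E → ℝ) (f' : E → E) (h : ℝ) (x : ℕ → E) (η : ℕ → ℝ) :
    Prop where
  step : ∀ k, x (k + 1) = x k - (h * η k) • f' (x k)
  energy_balance : ∀ k, f (x (k + 1)) - f (x k) = η k * ⟪f' (x k), x (k + 1) - x k⟫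

namespace IsEnergyBalancedDescent

variable {f : E → ℝ} {f' : E → E} {h : ℝ} {x : ℕ → E} {η : ℕ → ℝ} {p : E}

theorem succ_sub_eq (hx : IsEnergyBalancedDescent f f' h x η) (k : ℕ) :
    x (k + 1) - x k = -((h * η k) • f' (x k)) := by
  rw [hx.step, sub_sub_cancel_left]

theorem norm_succ_sub_sq (hx : IsEnergyBalancedDescent f f' h x η) (k : ℕ) :
    ‖x (k + 1) - x k‖ ^ 2 = h * (f (x k) - f (x (k + 1))) := by
  calc ‖x (k + 1) - x k‖ ^ 2 = ⟪-((h * η k) • f' (x k)), x (k + 1) - x k⟫ := by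
        rw [← hx.succ_sub_eq, real_inner_self_eq_norm_sq]
    _ = -h * (η k * ⟪f' (x k), x (k + 1) - x k⟫) := by
        rw [inner_neg_left, real_inner_smul_left]; ring
    _ = h * (f (x k) - f (x (k + 1))) := by rw [← hx.energy_balance]; ring

theorem antitone_comp (hx : IsEnergyBalancedDescent f f' h x η) (hh : 0 < h) :
    Antitone (f ∘ x) := by
  refine antitone_nat_of_succ_le fun k => sub_nonneg.1 ?_
  have hdecrease : 0 ≤ h * (f (x k) - f (x (k + 1))) := hx.norm_succ_sub_sq k ▸ sq_nonneg _
  exact nonneg_of_mul_nonneg_right hdecrease hh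

theorem tendsto_succ_sub_zero (hx : IsEnergyBalancedDescent f f' h x η) {c : ℝ}
    (hc : Tendsto (f ∘ x) atTop (𝓝 c)) :
    Tendsto (fun k => x (k + 1) - x k) atTop (𝓝 0) := by
  have hdecrease : Tendsto (fun k => h * (f (x k) - f (x (k + 1)))) atTop (𝓝 0) := by
    simpa using (hc.sub (hc.comp (tendsto_add_atTop_nat 1))).const_mul h
  simp_rw [← hx.norm_succ_sub_sq] at hdecrease
  exact tendsto_zero_iff_norm_tendsto_zero.2 (by simpa using hdecrease.sqrt)

theorem inv_smul_succ_sub (hx : IsEnergyBalancedDescent f f' h x η) {k : ℕ} (hη : η k ≠ 0) :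
    (η k)⁻¹ • (x (k + 1) - x k) = -(h • f' (x k)) := by
  rw [hx.succ_sub_eq, smul_neg, mul_comm, mul_smul, inv_smul_smul₀ hη]

theorem inv_smul_comp_succ_sub (hx : IsEnergyBalancedDescent f f' h x η) {k : ℕ}
    (hη : η k ≠ 0) :
    (η k)⁻¹ • (f (x (k + 1)) - f (x k)) = ⟪f' (x k), x (k + 1) - x k⟫ := by
  rw [hx.energy_balance, smul_eq_mul, inv_mul_cancel_left₀ hη]

theorem gradient_eq_zero_of_mapClusterPt [CompleteSpace E]
    (hx : IsEnergyBalancedDescent f f' h x η) (hh : 0 < h) (hη : ∀ k, η k ≠ 0)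
    (hf : ∀ᶠ y in 𝓝 p, HasGradientAt f (f' y) y) (hf' : ContinuousAt f' p)
    (hp : MapClusterPt p atTop x) : f' p = 0 := by
  have hvalues : Tendsto (f ∘ x) atTop (𝓝 (f p)) :=
    tendsto_atTop_of_antitone_of_mapClusterPt (hx.antitone_comp hh)
      (hp.continuousAt_comp hf.self_of_nhds.continuousAt)
  obtain ⟨φ, hφ, hφp : Tendsto (fun k => x (φ k)) atTop (𝓝 p)⟩ := hp.tendsto_subseq
  have hstep : Tendsto (fun k => x (φ k + 1) - x (φ k)) atTop (𝓝 0) :=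
    (hx.tendsto_succ_sub_zero hvalues).comp hφ.tendsto_atTop
  have hsucc : Tendsto (fun k => x (φ k + 1)) atTop (𝓝 p) := by
    simpa using hstep.add hφp
  have hgrad : Tendsto (fun k => f' (x (φ k))) atTop (𝓝 (f' p)) := hf'.tendsto.comp hφp
  have hdirection :
      Tendsto (fun k => (η (φ k))⁻¹ • (x (φ k + 1) - x (φ k))) atTop (𝓝 (-(h • f' p))) := by
    simpa only [hx.inv_smul_succ_sub (hη _)] using (hgrad.const_smul h).neg
  have hsecant : Tendsto (fun k => ⟪f' (x (φ k)), x (φ k + 1) - x (φ k)⟫) atTop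
      (𝓝 ⟪f' p, -(h • f' p)⟫) := by
    simpa only [hx.inv_smul_comp_succ_sub (hη _), InnerProductSpace.toDual_apply_apply] using
      tendsto_smul_sub_of_hasStrictFDerivAt
        (hasStrictFDerivAt_of_hasGradientAt_of_continuousAt hf hf') hsucc hφp hdirection
  have hinner : ⟪f' p, -(h • f' p)⟫ = 0 := by
    simpa only [inner_zero_right] using tendsto_nhds_unique hsecant (hgrad.inner hstep)
  simpa [inner_neg_right, real_inner_smul_right, hh.ne'] using hinner

theorem exists_mapClusterPt (hx : IsEnergyBalancedDescent f f' h x η) (hh : 0 < h)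
    (hcoercive : Tendsto f (cocompact E) atTop) : ∃ p, MapClusterPt p atTop x :=
  exists_mapClusterPt_of_tendsto_cocompact_atTop hcoercive
    (Frequently.of_forall fun k => hx.antitone_comp hh (Nat.zero_le k))

end IsEnergyBalancedDescent

end Scheme

theorem stmt_12_general {E : Type*} [NormedAddCommGroup E] [InnerProductSpace ℝ E]
    [CompleteSpace E] {f : E → ℝ} {f' : E → E} (hf : ∀ y, HasGradientAt f (f' y) y)
    (hf' : Continuous f') {h : ℝ} (hh : 0 < h) {x : ℕ → E} {η : ℕ → ℝ} (hη : ∀ k, η k ≠ 0)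
    (hx : IsEnergyBalancedDescent f f' h x η) :
    (Tendsto f (cocompact E) atTop → ∃ p, MapClusterPt p atTop x) ∧
    ∀ p, MapClusterPt p atTop x → f' p = 0 :=
  ⟨hx.exists_mapClusterPt hh, fun _ =>
    hx.gradient_eq_zero_of_mapClusterPt hh hη (.of_forall hf) hf'.continuousAt⟩

/-- Accumulation points of the scheme are stationary (Theorem `thm:grobal`). -/
theorem stmt_12 (n : ℕ) (hn : 1 ≤ n)
    (f : EuclideanSpace ℝ (Fin n) → ℝ)
    (f' : EuclideanSpace ℝ (Fin n) → EuclideanSpace ℝ (Fin n))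
    (hf : ∀ x, HasGradientAt f (f' x) x)
    (L : ℝ) (hL : 0 < L)
    (hLip : ∀ x y, ‖f' x - f' y‖ ≤ L * ‖x - y‖)
    (xstar : EuclideanSpace ℝ (Fin n)) (hstar : ∀ y, f xstar ≤ f y)
    (hcoercive : Filter.Tendsto f (Filter.cocompact (EuclideanSpace ℝ (Fin n))) Filter.atTop)
    (h : ℝ) (hh : 0 < h)
    (x : ℕ → EuclideanSpace ℝ (Fin n)) (η : ℕ → ℝ) (hηpos : ∀ k, 0 < η k)
    (hscheme1 : ∀ k : ℕ, x (k + 1) = x k - (h * η k) • f' (x k))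
    (hscheme2 : ∀ k : ℕ,
      f (x (k + 1)) - f (x k) = η k * ⟪f' (x k), x (k + 1) - x k⟫) :
    (∃ p : EuclideanSpace ℝ (Fin n), MapClusterPt p Filter.atTop x) ∧
    ∀ p : EuclideanSpace ℝ (Fin n), MapClusterPt p Filter.atTop x → f' p = 0 := by
  have hf' : Continuous f' :=
    (LipschitzWith.of_dist_le' (by simpa only [dist_eq_norm] using hLip)).continuous
  exact (stmt_12_general hf hf' hh (fun k => (hηpos k).ne') ⟨hscheme1, hscheme2⟩).imp_left
    (· hcoercive)
end

section
/- Assume f is convex and 0 < h ≤ 2/L. Let (x_k), (η_k) satisfy the scheme with η_k > 0 for every k. Then for every k ≥ 1, f(x_k) − f⋆ ≤ ((Lh + 2)/4) · ‖x₀ − x⋆‖²/(kh). -/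
open RealInnerProductSpace

/-!
Let `K` be the Lipschitz constant of `∇f`. For a step `y = x - (h * η) • ∇f x` of the scheme, the
energy condition reads `f x - f y = h * η ^ 2 * ‖∇f x‖ ^ 2`. Comparing it with the descent lemma
bounds the multiplier from below: `2 ≤ η * (K * h + 2)`. It also turns the usual expansion of
`‖y - z‖ ^ 2` into `2 * h * η * (f x - f z) ≤ ‖x - z‖ ^ 2 - ‖y - z‖ ^ 2 + h * (f x - f y)`.
When `f z ≤ f x`, multiplying by `K * h + 2 ≤ 4` turns the left side into at least
`4 * h * (f x - f z)` and the last term into at most `4 * h * (f x - f y)`, so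
`4 * h * (f y - f z) ≤ (K * h + 2) * (‖x - z‖ ^ 2 - ‖y - z‖ ^ 2)`, which telescopes.
-/

open scoped NNReal
open AffineMap (lineMap)

theorem nsmul_le_sub_of_antitone_of_succ_le_sub {M : Type*} [AddCommGroup M] [PartialOrder M]
    [IsOrderedAddMonoid M] {a V : ℕ → M} (ha : Antitone a) {k : ℕ}
    (hV : ∀ i < k, a (i + 1) ≤ V i - V (i + 1)) : k • a k ≤ V 0 - V k := by
  have hterm : ∀ i ∈ Finset.range k, a k ≤ V i - V (i + 1) := fun i hi =>
    have hik : i < k := Finset.mem_range.1 hi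
    (ha hik).trans (hV i hik)
  simpa only [Finset.card_range, Finset.sum_range_sub'] using
    Finset.card_nsmul_le_sum _ _ _ hterm

variable {E : Type*} [NormedAddCommGroup E] [InnerProductSpace ℝ E]

section Gradient

variable [CompleteSpace E] {f : E → ℝ}

theorem hasDerivAt_comp_lineMap_of_hasGradientAt {g x y : E} {t : ℝ}
    (hf : HasGradientAt f g (lineMap x y t)) :
    HasDerivAt (f ∘ (lineMap x y : ℝ →ᵃ[ℝ] E)) ⟪g, y - x⟫ t := by
  simpa only [InnerProductSpace.toDual_apply_apply] using
    hf.hasFDerivAt.comp_hasDerivAt t AffineMap.hasDerivAt_lineMap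

theorem add_inner_le_of_convexOn_of_hasGradientAt {s : Set E} {g x y : E} (hconv : ConvexOn ℝ s f)
    (hx : x ∈ s) (hy : y ∈ s) (hf : HasGradientAt f g x) : f x + ⟪g, y - x⟫ ≤ f y := by
  have hline := hconv.comp_affineMap (lineMap x y : ℝ →ᵃ[ℝ] E)
  have hderiv : HasDerivAt (f ∘ (lineMap x y : ℝ →ᵃ[ℝ] E)) ⟪g, y - x⟫ 0 :=
    hasDerivAt_comp_lineMap_of_hasGradientAt (by simpa using hf)
  have hslope : ⟪g, y - x⟫ ≤ f y - f x := by
    simpa [slope_def_field] using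
      hline.le_slope_of_hasDerivAt (x := 0) (y := 1) (by simpa using hx) (by simpa using hy)
        zero_lt_one hderiv
  linarith

theorem le_add_inner_add_of_lipschitzWith_gradient {f' : E → E} {K : ℝ≥0}
    (hf : ∀ x, HasGradientAt f (f' x) x) (hK : LipschitzWith K f') (x y : E) :
    f y ≤ f x + ⟪f' x, y - x⟫ + K / 2 * ‖y - x‖ ^ 2 := by
  have hderiv (t : ℝ) := hasDerivAt_comp_lineMap_of_hasGradientAt (hf (lineMap x y t))
  have hbound_deriv (t : ℝ) : HasDerivAt
      (fun s : ℝ => f x + s * ⟪f' x, y - x⟫ + s ^ 2 * (K / 2 * ‖y - x‖ ^ 2))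
      (⟪f' x, y - x⟫ + t * (K * ‖y - x‖ ^ 2)) t := by
    refine ((((hasDerivAt_id t).mul_const ⟪f' x, y - x⟫).const_add (f x)).add
      ((hasDerivAt_pow 2 t).mul_const (K / 2 * ‖y - x‖ ^ 2))).congr_deriv ?_
    push_cast
    ring
  have hderiv_le (t : ℝ) (ht : 0 ≤ t) :
      ⟪f' (lineMap x y t), y - x⟫ ≤ ⟪f' x, y - x⟫ + t * (K * ‖y - x‖ ^ 2) := by
    have hlip : ‖f' (lineMap x y t) - f' x‖ ≤ K * (t * ‖y - x‖) := by
      simpa [← dist_eq_norm, dist_comm y x, abs_of_nonneg ht] using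
        hK.dist_le_mul (lineMap x y t) x
    calc ⟪f' (lineMap x y t), y - x⟫
        = ⟪f' x, y - x⟫ + ⟪f' (lineMap x y t) - f' x, y - x⟫ := by rw [inner_sub_left]; ring
      _ ≤ ⟪f' x, y - x⟫ + ‖f' (lineMap x y t) - f' x‖ * ‖y - x‖ := by
          gcongr
          exact real_inner_le_norm _ _
      _ ≤ ⟪f' x, y - x⟫ + K * (t * ‖y - x‖) * ‖y - x‖ := by gcongr
      _ = ⟪f' x, y - x⟫ + t * (K * ‖y - x‖ ^ 2) := by ring
  simpa using image_le_of_deriv_right_le_deriv_boundary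
    (fun t _ => (hderiv t).continuousAt.continuousWithinAt)
    (fun t _ => (hderiv t).hasDerivWithinAt) (by simp)
    (fun t _ => (hbound_deriv t).continuousAt.continuousWithinAt)
    (fun t _ => (hbound_deriv t).hasDerivWithinAt)
    (fun t ht => hderiv_le t ht.1) (Set.right_mem_Icc.2 zero_le_one)

end Gradient

/-- One step of the scheme from `x` to `y` with step size `h` and multiplier `η`: a gradient step
scaled by `η` whose energy balance holds with the same factor `η`. The vector `g` stands for the
gradient of `f` at `x`. -/
structure IsMultiplierStep (f : E → ℝ) (g : E) (h η : ℝ) (x y : E) : Prop where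
  eq_sub_smul : y = x - (h * η) • g
  sub_eq_mul_inner : f y - f x = η * ⟪g, y - x⟫

namespace IsMultiplierStep

variable {f : E → ℝ} {g x y z : E} {h η : ℝ}

theorem inner_sub_eq (hstep : IsMultiplierStep f g h η x y) :
    ⟪g, y - x⟫ = -(h * η * ‖g‖ ^ 2) := by
  rw [hstep.eq_sub_smul, sub_sub_cancel_left, inner_neg_right, real_inner_smul_right,
    real_inner_self_eq_norm_sq]

theorem sub_eq_mul_norm_sq (hstep : IsMultiplierStep f g h η x y) :
    f x - f y = h * η ^ 2 * ‖g‖ ^ 2 := by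
  linear_combination -hstep.sub_eq_mul_inner - η * hstep.inner_sub_eq

theorem apply_le (hstep : IsMultiplierStep f g h η x y) (hh : 0 ≤ h) : f y ≤ f x := by
  rw [← sub_nonneg, hstep.sub_eq_mul_norm_sq]
  positivity

theorem norm_sub_sq_eq (hstep : IsMultiplierStep f g h η x y) (z : E) :
    ‖y - z‖ ^ 2 = ‖x - z‖ ^ 2 + 2 * (h * η) * ⟪g, z - x⟫ + h * (f x - f y) := by
  have hsub : y - z = (x - z) - (h * η) • g := by rw [hstep.eq_sub_smul]; abel
  rw [hsub, norm_sub_sq_real, real_inner_smul_right, norm_smul, mul_pow, Real.norm_eq_abs, sq_abs,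
    real_inner_comm, ← neg_sub z x, inner_neg_right, hstep.sub_eq_mul_norm_sq]
  ring

variable [CompleteSpace E]

theorem multiplier_nonneg (hstep : IsMultiplierStep f g h η x y) (hf : HasGradientAt f g x)
    (hconv : ConvexOn ℝ Set.univ f) (hh : 0 < h) (hg : g ≠ 0) : 0 ≤ η := by
  have hgrad := add_inner_le_of_convexOn_of_hasGradientAt hconv (Set.mem_univ x) (Set.mem_univ y) hf
  rw [hstep.inner_sub_eq] at hgrad
  have hscaled : h * ‖g‖ ^ 2 * η ^ 2 ≤ h * ‖g‖ ^ 2 * η := by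
    linarith [hstep.sub_eq_mul_norm_sq]
  exact (sq_nonneg η).trans (le_of_mul_le_mul_left hscaled (by positivity))

theorem two_le_multiplier_mul {f' : E → E} {K : ℝ≥0} (hstep : IsMultiplierStep f (f' x) h η x y)
    (hf : ∀ x, HasGradientAt f (f' x) x) (hK : LipschitzWith K f') (hh : 0 < h) (hη : 0 < η)
    (hg : f' x ≠ 0) : 2 ≤ η * (K * h + 2) := by
  have hdescent := le_add_inner_add_of_lipschitzWith_gradient hf hK x y
  have hnorm : ‖y - x‖ ^ 2 = (h * η) ^ 2 * ‖f' x‖ ^ 2 := by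
    rw [hstep.eq_sub_smul, sub_sub_cancel_left, norm_neg, norm_smul, mul_pow, Real.norm_eq_abs,
      sq_abs]
  rw [hstep.inner_sub_eq, hnorm] at hdescent
  have hscaled : h * η * ‖f' x‖ ^ 2 * 2 ≤ h * η * ‖f' x‖ ^ 2 * (η * (K * h + 2)) := by
    linarith [hstep.sub_eq_mul_norm_sq]
  exact le_of_mul_le_mul_left hscaled (by positivity)

theorem mul_sub_le_norm_sq_sub_norm_sq (hstep : IsMultiplierStep f g h η x y)
    (hf : HasGradientAt f g x) (hconv : ConvexOn ℝ Set.univ f) (hh : 0 ≤ h) (hη : 0 ≤ η) (z : E) :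
    2 * (h * η) * (f x - f z) ≤ ‖x - z‖ ^ 2 - ‖y - z‖ ^ 2 + h * (f x - f y) := by
  have hgrad := add_inner_le_of_convexOn_of_hasGradientAt hconv (Set.mem_univ x) (Set.mem_univ z) hf
  calc 2 * (h * η) * (f x - f z) ≤ 2 * (h * η) * (-⟪g, z - x⟫) := by
        gcongr
        linarith
    _ = ‖x - z‖ ^ 2 - ‖y - z‖ ^ 2 + h * (f x - f y) := by
        linear_combination hstep.norm_sub_sq_eq z

theorem four_mul_sub_le {f' : E → E} {K : ℝ≥0} (hstep : IsMultiplierStep f (f' x) h η x y)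
    (hf : ∀ x, HasGradientAt f (f' x) x) (hK : LipschitzWith K f') (hconv : ConvexOn ℝ Set.univ f)
    (hh : 0 < h) (hKh : K * h ≤ 2) (hη : η ≠ 0) (hzx : f z ≤ f x) :
    4 * h * (f y - f z) ≤ (K * h + 2) * (‖x - z‖ ^ 2 - ‖y - z‖ ^ 2) := by
  by_cases hg : f' x = 0
  · have hyx : y = x := by simpa [hg] using hstep.eq_sub_smul
    have hxz : f x ≤ f z := by
      simpa [hg] using
        add_inner_le_of_convexOn_of_hasGradientAt hconv (Set.mem_univ x) (Set.mem_univ z) (hf x)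
    simp [hyx, hxz.antisymm hzx]
  have hη_pos : 0 < η := (hstep.multiplier_nonneg (hf x) hconv hh hg).lt_of_ne' hη
  have hdecrease : 0 ≤ f x - f y := sub_nonneg.2 (hstep.apply_le hh.le)
  have hgap : 0 ≤ f x - f z := sub_nonneg.2 hzx
  have hx_gap : 4 * h * (f x - f z) ≤
      (K * h + 2) * (‖x - z‖ ^ 2 - ‖y - z‖ ^ 2) + 4 * h * (f x - f y) :=
    calc 4 * h * (f x - f z) = 2 * (2 * h * (f x - f z)) := by ring
      _ ≤ η * (K * h + 2) * (2 * h * (f x - f z)) := by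
          exact mul_le_mul_of_nonneg_right (hstep.two_le_multiplier_mul hf hK hh hη_pos hg)
            (mul_nonneg (by positivity) hgap)
      _ = (K * h + 2) * (2 * (h * η) * (f x - f z)) := by ring
      _ ≤ (K * h + 2) * (‖x - z‖ ^ 2 - ‖y - z‖ ^ 2 + h * (f x - f y)) := by
          gcongr
          exact hstep.mul_sub_le_norm_sq_sub_norm_sq (hf x) hconv hh.le hη_pos.le z
      _ = (K * h + 2) * (‖x - z‖ ^ 2 - ‖y - z‖ ^ 2) + (K * h + 2) * (h * (f x - f y)) := by ring
      _ ≤ (K * h + 2) * (‖x - z‖ ^ 2 - ‖y - z‖ ^ 2) + 4 * (h * (f x - f y)) := by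
          gcongr
          linarith
      _ = (K * h + 2) * (‖x - z‖ ^ 2 - ‖y - z‖ ^ 2) + 4 * h * (f x - f y) := by ring
  linarith

end IsMultiplierStep

theorem stmt_13_general [CompleteSpace E] {f : E → ℝ} {f' : E → E} {K : ℝ≥0} {h : ℝ} {x : ℕ → E}
    {η : ℕ → ℝ} (hf : ∀ x, HasGradientAt f (f' x) x) (hK : LipschitzWith K f')
    (hconv : ConvexOn ℝ Set.univ f) (hh : 0 < h) (hKh : K * h ≤ 2) (hη : ∀ k, η k ≠ 0)
    (hstep : ∀ k, IsMultiplierStep f (f' (x k)) h (η k) (x k) (x (k + 1))) (z : E) {k : ℕ}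
    (hk : 1 ≤ k) : f (x k) - f z ≤ (K * h + 2) / 4 * (‖x 0 - z‖ ^ 2 / (k * h)) := by
  obtain hkz | hzk := le_total (f (x k)) (f z)
  · exact (sub_nonpos.2 hkz).trans (by positivity)
  have hmono : Antitone fun i => f (x i) :=
    antitone_nat_of_succ_le fun i => (hstep i).apply_le hh.le
  have hgap_mono : Antitone fun i => 4 * h * (f (x i) - f z) := fun i j hij => by
    have hij_le : f (x j) ≤ f (x i) := hmono hij
    dsimp only
    gcongr
  have hsum : k • (4 * h * (f (x k) - f z)) ≤
      (K * h + 2) * ‖x 0 - z‖ ^ 2 - (K * h + 2) * ‖x k - z‖ ^ 2 :=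
    nsmul_le_sub_of_antitone_of_succ_le_sub (V := fun i => (K * h + 2) * ‖x i - z‖ ^ 2) hgap_mono
      fun i hi => by
        rw [← mul_sub]
        exact (hstep i).four_mul_sub_le hf hK hconv hh hKh (hη i) (hzk.trans (hmono hi.le))
  rw [nsmul_eq_mul] at hsum
  have hk_pos : (0 : ℝ) < k := by exact_mod_cast hk
  have hlast : 0 ≤ (K * h + 2) * ‖x k - z‖ ^ 2 := by positivity
  rw [div_mul_div_comm, le_div_iff₀ (mul_pos four_pos (mul_pos hk_pos hh))]
  linarith

/-- O(1/k) rate for convex functions (Theorem `thm:LMrate2`). -/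
theorem stmt_13 (n : ℕ) (hn : 1 ≤ n)
    (f : EuclideanSpace ℝ (Fin n) → ℝ)
    (f' : EuclideanSpace ℝ (Fin n) → EuclideanSpace ℝ (Fin n))
    (hf : ∀ x, HasGradientAt f (f' x) x)
    (L : ℝ) (hL : 0 < L)
    (hLip : ∀ x y, ‖f' x - f' y‖ ≤ L * ‖x - y‖)
    (xstar : EuclideanSpace ℝ (Fin n)) (hstar : ∀ y, f xstar ≤ f y)
    (hconv : ConvexOn ℝ Set.univ f)
    (h : ℝ) (hh : 0 < h)
    (x : ℕ → EuclideanSpace ℝ (Fin n)) (η : ℕ → ℝ) (hηpos : ∀ k, 0 < η k)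
    (hscheme1 : ∀ k : ℕ, x (k + 1) = x k - (h * η k) • f' (x k))
    (hscheme2 : ∀ k : ℕ,
      f (x (k + 1)) - f (x k) = η k * ⟪f' (x k), x (k + 1) - x k⟫)
    (hh2 : h ≤ 2 / L) :
    ∀ k : ℕ, 1 ≤ k →
      f (x k) - f xstar ≤ ((L * h + 2) / 4) * (‖x 0 - xstar‖ ^ 2 / (k * h)) := by
  lift L to ℝ≥0 using hL.le
  have hK : LipschitzWith L f' := .of_dist_le_mul (by simpa only [dist_eq_norm] using hLip)
  exact fun k => stmt_13_general hf hK hconv hh ((le_div_iff₀' hL).1 hh2) (fun k => (hηpos k).ne')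
    (fun k => ⟨hscheme1 k, hscheme2 k⟩) xstar
end

section
/- Let α ∈ (0, 1), η* ∈ (0, α), L > 0, and set h_LB := 2(α − η*)/(η*L). Let (h_k) and (η_k) be sequences of positive reals satisfying η_k ≥ 2α/(Lh_k + 2) and h_{k+1} = h_kη_k/η* for all k ≥ 0. If h₀ ≥ h_LB, then h_k ≥ h_LB for every k ≥ 0. -/
/-!
When backtracking returns the least admissible `η = 2α / (Lh + 2)`, the step size is updated by the
map `h ↦ (2α / η*) · h / (Lh + 2)`. This map is increasing on `[0, ∞)` and its nonzero fixed point
is `h_LB`, so it sends `[h_LB, ∞)` into itself; a larger `η` only makes the next step size larger.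
-/

/-- The threshold `h_LB = 2(α - η*) / (η* L)` below which the adaptive step sizes never fall;
`ηs` stands for the target value `η*`. -/
def stepSizeLB {K : Type*} [Field K] (α ηs L : K) : K :=
  2 * (α - ηs) / (ηs * L)

/-- The worst-case successor of a step size `h`: the update `h * η / η*` for the least value
`η = 2α / (Lh + 2)` that backtracking can return. -/
def worstCaseUpdate {K : Type*} [Field K] (α ηs L h : K) : K :=
  h * (2 * α / (L * h + 2)) / ηs

section Field

variable {K : Type*} [Field K] {α ηs L : K}

lemma mul_stepSizeLB_add_two (hηs : ηs ≠ 0) (hL : L ≠ 0) :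
    L * stepSizeLB α ηs L + 2 = 2 * α / ηs := by
  unfold stepSizeLB
  field_simp
  ring

lemma isFixedPt_worstCaseUpdate_stepSizeLB [NeZero (2 : K)]
    (hα : α ≠ 0) (hηs : ηs ≠ 0) (hL : L ≠ 0) :
    Function.IsFixedPt (worstCaseUpdate α ηs L) (stepSizeLB α ηs L) := by
  rw [Function.IsFixedPt, worstCaseUpdate, mul_stepSizeLB_add_two hηs hL,
    div_div_cancel₀ (mul_ne_zero two_ne_zero hα), mul_div_cancel_right₀ _ hηs]

end Field

section LinearOrderedField

variable {K : Type*} [Field K] [LinearOrder K] [IsStrictOrderedRing K] {α ηs L : K}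

lemma stepSizeLB_nonneg (hηs : 0 ≤ ηs) (hηsα : ηs ≤ α) (hL : 0 ≤ L) :
    0 ≤ stepSizeLB α ηs L :=
  div_nonneg (mul_nonneg zero_le_two (sub_nonneg.2 hηsα)) (mul_nonneg hηs hL)

lemma monotoneOn_worstCaseUpdate (hα : 0 ≤ α) (hηs : 0 ≤ ηs) (hL : 0 ≤ L) :
    MonotoneOn (worstCaseUpdate α ηs L) (Set.Ici 0) := by
  intro x (hx : 0 ≤ x) y (hy : 0 ≤ y) hxy
  refine div_le_div_of_nonneg_right ?_ hηs
  rw [← mul_div_assoc, ← mul_div_assoc, div_le_div_iff₀ (by positivity) (by positivity)]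
  calc x * (2 * α) * (L * y + 2) = 2 * α * (L * x * y + 2 * x) := by ring
    _ ≤ 2 * α * (L * x * y + 2 * y) := by gcongr
    _ = y * (2 * α) * (L * x + 2) := by ring

lemma stepSizeLB_le_mul_div {h η : K} (hηs : 0 < ηs) (hηsα : ηs ≤ α) (hL : 0 < L)
    (hh : stepSizeLB α ηs L ≤ h) (hη : 2 * α / (L * h + 2) ≤ η) :
    stepSizeLB α ηs L ≤ h * η / ηs := by
  have hα : 0 < α := hηs.trans_le hηsα
  have hLB : 0 ≤ stepSizeLB α ηs L := stepSizeLB_nonneg hηs.le hηsα hL.le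
  have hh_nonneg : 0 ≤ h := hLB.trans hh
  calc stepSizeLB α ηs L
      = worstCaseUpdate α ηs L (stepSizeLB α ηs L) :=
        (isFixedPt_worstCaseUpdate_stepSizeLB hα.ne' hηs.ne' hL.ne').symm
    _ ≤ worstCaseUpdate α ηs L h :=
        monotoneOn_worstCaseUpdate hα.le hηs.le hL.le hLB hh_nonneg hh
    _ ≤ h * η / ηs := by unfold worstCaseUpdate; gcongr

theorem stmt_18_general (hηs : 0 < ηs) (hηsα : ηs ≤ α) (hL : 0 < L) {h η : ℕ → K}
    (hlb : ∀ k, 2 * α / (L * h k + 2) ≤ η k)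
    (hupd : ∀ k, h (k + 1) = h k * η k / ηs)
    (h0 : stepSizeLB α ηs L ≤ h 0) (k : ℕ) :
    stepSizeLB α ηs L ≤ h k := by
  induction k with
  | zero => exact h0
  | succ k ih => exact hupd k ▸ stepSizeLB_le_mul_div hηs hηsα hL ih (hlb k)

end LinearOrderedField

/-- Lower bound on the adaptive step sizes. -/
theorem stmt_18 (α ηs L : ℝ) (hα0 : 0 < α) (hα1 : α < 1)
    (hηs0 : 0 < ηs) (hηsα : ηs < α) (hL : 0 < L)
    (h η : ℕ → ℝ)
    (hhpos : ∀ k : ℕ, 0 < h k) (hηpos : ∀ k : ℕ, 0 < η k)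
    (hlb : ∀ k : ℕ, 2 * α / (L * h k + 2) ≤ η k)
    (hupd : ∀ k : ℕ, h (k + 1) = h k * η k / ηs)
    (h0 : 2 * (α - ηs) / (ηs * L) ≤ h 0) :
    ∀ k : ℕ, 2 * (α - ηs) / (ηs * L) ≤ h k :=
  stmt_18_general hηs0 hηsα.le hL hlb hupd h0
end
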